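/- arXiv:2411.03681 — 5 statements merged into one kernel-verified Lean document; each statement's English description precedes it below -/
import Mathlib

section
/- Let p > 2 be a prime and a, b integers with p not dividing b² − 4a². Then modulo p: (i) for all natural numbers N, n₀ with n₀ < p − 2, 2a²·M^{a,b}_{N·p + n₀} ≡ T^{a,b}_N · (2a²·M^{a,b}_{n₀}); (ii) for all natural numbers N, k and m ≤ p−2, with n = N·p^{k+2} + m·p^{k+1} + p^{k+1} − 2 (base-p digits: those of N, then m, then k digits p−1, then p−2), 2a²·M^{a,b}_n ≡ T^{a,b}_N · ( b·T^{a,b}_m·(T^{a,b}_{p−1})^{k+1} − T^{a,b}_{m+1} ); (iii) for all natural numbers N, k and m ≤ p−2, with n = N·p^{k+2} + m·p^{k+1} + p^{k+1} − 1 (base-p digits: those of N, then m, then k digits p−1, then p−1) and ℓ = p−2−m, (b²−4a²)^{(p−1)/2} · 2a²·M^{a,b}_n ≡ (b²−4a²)^{m+1} · T^{a,b}_N · ( b·T^{a,b}_ℓ − (T^{a,b}_{p−1})^{k+1}·T^{a,b}_{ℓ+1} ) (this last congruence is the paper's 2a²M_n ≡ (b²−4a²)^{m+1−(p−1)/2}·T_N·(bT_ℓ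 − (T_{p−1})^{k+1}T_{ℓ+1}) with the invertible factor (b²−4a²)^{(p−1)/2} cleared to avoid negative exponents). -/
open Polynomial

/-- The generalized central trinomial coefficient `T^{a,b}_n`:
the coefficient of `X^n` in `(a + bX + aX^2)^n`. -/
noncomputable def genTrinomial (a b : ℤ) (n : ℕ) : ℤ :=
  ((C a + C b * X + C a * X ^ 2) ^ n).coeff n

/-- The generalized Motzkin number `M^{a,b}_n`:
the coefficient of `X^n` in `(a + bX + aX^2)^n * (1 - X^2)`. -/
noncomputable def genMotzkin (a b : ℤ) (n : ℕ) : ℤ :=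
  (((C a + C b * X + C a * X ^ 2) ^ n) * (1 - X ^ 2)).coeff n


lemma tri_rec (a b : ℤ) (k : ℕ) :
    ((k : ℤ) + 2) * genTrinomial a b (k + 2) = (2 * k + 3) * b * genTrinomial a b (k + 1)
      - (k + 1) * (b ^ 2 - 4 * a ^ 2) * genTrinomial a b k := by
  unfold genTrinomial
  set P : ℤ[X] := C a + C b * X + C a * X ^ 2 with hP
  have hder : derivative P = C b + 2 * C a * X := by
    simp [hP]; ring
  have h1 : X * derivative (C a * (X ^ 2 - 1) * P ^ (k + 1))
      = C ((k : ℤ) + 2) * (C a * (X ^ 2 - 1) * P ^ (k + 1)) + (C ((k : ℤ) + 2) * P ^ (k + 2)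
        - C ((2 * k + 3) * b) * (P ^ (k + 1) * X)
        + C ((k + 1) * (b ^ 2 - 4 * a ^ 2)) * (P ^ k * X ^ 2)) := by
    rw [derivative_mul, derivative_pow, hder]
    simp only [derivative_mul, derivative_C, derivative_sub, derivative_X_pow, derivative_one,
      Nat.add_sub_cancel, map_add, map_mul, map_sub, map_pow, map_natCast, map_ofNat, map_one,
      Nat.cast_add, Nat.cast_one, pow_succ P]
    simp only [hP]
    push_cast
    ring
  have h2 := congrArg (fun q => coeff q (k + 2)) h1
  simp only [coeff_X_mul, coeff_derivative, coeff_add, coeff_sub, coeff_C_mul] at h2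
  have h3 : (P ^ (k + 1) * X).coeff (k + 2) = (P ^ (k + 1)).coeff (k + 1) :=
    coeff_mul_X (P ^ (k + 1)) (k + 1)
  rw [h3, coeff_mul_X_pow] at h2
  simp only [mul_assoc, coeff_C_mul] at h2
  push_cast at h2
  linarith

lemma tri_zero (a b : ℤ) : genTrinomial a b 0 = 1 := by
  simp [genTrinomial]

lemma tri_one (a b : ℤ) : genTrinomial a b 1 = b := by
  simp [genTrinomial, coeff_X, coeff_X_pow, -eq_intCast, coeff_C]

lemma motz_eq (a b : ℤ) (n : ℕ) :
    2 * a ^ 2 * genMotzkin a b n = 2 * b * genTrinomial a b (n + 1) - genTrinomial a b (n + 2)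
      - (b ^ 2 - 4 * a ^ 2) * genTrinomial a b n := by
  have hsymm : ∀ i j, i + j = 2 * n → ((C a + C b * X + C a * X ^ 2 : ℤ[X]) ^ n).coeff i
      = ((C a + C b * X + C a * X ^ 2 : ℤ[X]) ^ n).coeff j := by
    clear * -
    induction n with
    | zero => intro i j h; obtain ⟨rfl, rfl⟩ : i = 0 ∧ j = 0 := by omega
              rfl
    | succ n ih =>
      have hdeg : ∀ i, 2 * n < i → ((C a + C b * X + C a * X ^ 2 : ℤ[X]) ^ n).coeff i = 0 := by
        intro i hi
        apply coeff_eq_zero_of_natDegree_lt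
        refine lt_of_le_of_lt natDegree_pow_le ?_
        have : (C a + C b * X + C a * X ^ 2 : ℤ[X]).natDegree ≤ 2 := by compute_degree
        nlinarith
      have hc : ∀ i, ((C a + C b * X + C a * X ^ 2 : ℤ[X]) ^ (n + 1)).coeff i
          = a * ((C a + C b * X + C a * X ^ 2 : ℤ[X]) ^ n).coeff i
          + b * (if 1 ≤ i then ((C a + C b * X + C a * X ^ 2 : ℤ[X]) ^ n).coeff (i - 1) else 0)
          + a * (if 2 ≤ i then ((C a + C b * X + C a * X ^ 2 : ℤ[X]) ^ n).coeff (i - 2) else 0) := by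
        intro i
        generalize hR : (C a + C b * X + C a * X ^ 2 : ℤ[X]) ^ n = R
        rw [pow_succ, hR, show R * (C a + C b * X + C a * X ^ 2) = C a * R + C b * (R * X ^ 1)
          + C a * (R * X ^ 2) by ring]
        simp only [coeff_add, coeff_C_mul, coeff_mul_X_pow']
      have main : ∀ i j, i + j = 2 * (n + 1) → i ≤ j →
          ((C a + C b * X + C a * X ^ 2 : ℤ[X]) ^ (n + 1)).coeff i
          = ((C a + C b * X + C a * X ^ 2 : ℤ[X]) ^ (n + 1)).coeff j := by
        intro i j h hij
        rw [hc, hc]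
        rcases i with _ | _ | i
        · rw [hdeg j (by omega), hdeg (j - 1) (by omega), ih 0 (j - 2) (by omega)]
          rw [if_pos (show 2 ≤ j by omega)]
          simp
        · rcases Nat.lt_or_ge j 2 with h2 | h2
          · obtain rfl : j = 1 := by omega
            rfl
          · rw [hdeg j (by omega), ih (0 + 1) (j - 2) (by omega), if_pos (by omega),
              if_pos (show 1 ≤ j by omega), if_pos h2, ih (0 + 1 - 1) (j - 1) (by omega)]
            simp; ring
        · rw [if_pos (by omega), if_pos (by omega), if_pos (by omega), if_pos (by omega),
            ih (i + 1 + 1 - 1) (j - 1) (by omega), ih (i + 1 + 1 - 2) j (by omega),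
            ih (i + 1 + 1) (j - 2) (by omega)]
          ring
      intro i j h
      rcases le_total i j with h' | h'
      · exact main i j h h'
      · exact (main j i (by omega) h').symm
  have hdeg : ∀ i, 2 * n < i → ((C a + C b * X + C a * X ^ 2 : ℤ[X]) ^ n).coeff i = 0 := by
    intro i hi
    apply coeff_eq_zero_of_natDegree_lt
    refine lt_of_le_of_lt natDegree_pow_le ?_
    have : (C a + C b * X + C a * X ^ 2 : ℤ[X]).natDegree ≤ 2 := by compute_degree
    nlinarith
  unfold genMotzkin genTrinomial
  rw [pow_add _ n 1, pow_add _ n 2]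
  generalize (C a + C b * X + C a * X ^ 2 : ℤ[X]) ^ n = R at *
  rw [show R * (C a + C b * X + C a * X ^ 2) ^ 1 = C a * R + C b * (R * X)
      + C a * (R * X ^ 2) by ring,
    show R * (C a + C b * X + C a * X ^ 2) ^ 2 = C (a ^ 2) * R + C (2 * a * b) * (R * X ^ 1)
      + C (b ^ 2 + 2 * a ^ 2) * (R * X ^ 2) + C (2 * a * b) * (R * X ^ 3)
      + C (a ^ 2) * (R * X ^ 4) by
        simp only [map_add, map_mul, map_pow, map_ofNat]; ring,
    show R * (1 - X ^ 2) = R - R * X ^ 2 by ring]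
  simp only [coeff_add, coeff_sub, coeff_C_mul, coeff_mul_X, coeff_mul_X_pow']
  rcases n with _ | _ | n
  · simp [hdeg]; ring
  · have := hsymm 0 2 rfl
    simp [hdeg, this]; ring
  · have s1 := hsymm (n + 1 + 1 + 1) (n + 1) (by ring)
    have s2 := hsymm (n + 1 + 1 + 2) n (by ring)
    simp [s1, s2]; ring

section
variable (p : ℕ) [hp : Fact p.Prime] (a b : ℤ)

lemma tri_cast (n : ℕ) : ((genTrinomial a b n : ℤ) : ZMod p)
    = ((C (a : ZMod p) + C (b : ZMod p) * X + C (a : ZMod p) * X ^ 2) ^ n).coeff n := by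
  have := coeff_map (p := ((C a + C b * X + C a * X ^ 2) ^ n : ℤ[X])) (Int.castRingHom (ZMod p)) n
  unfold genTrinomial
  rw [eq_intCast (Int.castRingHom (ZMod p))] at this
  rw [← this]
  simp [Polynomial.map_pow]

lemma tri_lucas (N r : ℕ) (hr : r < p) : ((genTrinomial a b (N * p + r) : ℤ) : ZMod p)
    = genTrinomial a b N * genTrinomial a b r := by
  rw [tri_cast, tri_cast, tri_cast]
  set P : (ZMod p)[X] := C (a : ZMod p) + C (b : ZMod p) * X + C (a : ZMod p) * X ^ 2 with hP
  have hdeg : (P ^ r).natDegree ≤ 2 * r := by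
    refine natDegree_pow_le.trans ?_
    have : P.natDegree ≤ 2 := by rw [hP]; compute_degree
    nlinarith
  have hp0 : 0 < p := hp.out.pos
  rw [pow_add, pow_mul, ← ZMod.expand_card, coeff_mul,
    Finset.sum_eq_single (N * p, r)]
  · rw [coeff_expand_mul hp0]
  · rintro ⟨i, j⟩ hij hne
    rw [Finset.HasAntidiagonal.mem_antidiagonal] at hij
    simp only at hij ⊢
    by_cases hd : p ∣ i
    · obtain ⟨c, rfl⟩ := hd
      rcases lt_trichotomy c N with h | h | h
      · rw [coeff_eq_zero_of_natDegree_lt (p := P ^ r), mul_zero]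
        nlinarith
      · subst h
        exact absurd (Prod.ext (mul_comm _ _) (by simp only; nlinarith)) hne
      · nlinarith
    · rw [coeff_expand hp0, if_neg hd, zero_mul]
  · intro h
    simp at h

lemma tri_shift (M k : ℕ) : ((genTrinomial a b (M * p ^ k) : ℤ) : ZMod p) = genTrinomial a b M := by
  induction k with
  | zero => simp
  | succ k ih =>
    have := tri_lucas p a b (M * p ^ k) 0 hp.out.pos
    rw [tri_zero, ih] at this
    rw [pow_succ, ← mul_assoc]
    simpa using this

lemma tri_nines (M k : ℕ) : ((genTrinomial a b (M * p ^ k + (p ^ k - 1)) : ℤ) : ZMod p)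
    = genTrinomial a b M * (genTrinomial a b (p - 1) : ZMod p) ^ k := by
  induction k with
  | zero => simp
  | succ k ih =>
    have h0 := hp.out.pos
    have := tri_lucas p a b (M * p ^ k + (p ^ k - 1)) (p - 1) (by omega)
    rw [ih] at this
    rw [pow_succ (n := k) (genTrinomial a b (p - 1) : ZMod p), ← mul_assoc, ← this]
    congr 2
    have h1 : 1 ≤ p ^ k := Nat.one_le_pow _ _ h0
    have h2 : 1 ≤ p ^ (k + 1) := Nat.one_le_pow _ _ h0
    have h3 : 1 ≤ p := h0
    zify [h1, h2, h3]
    ring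

lemma tri_rec_cast (k : ℕ) :
    ((k : ZMod p) + 2) * (genTrinomial a b (k + 2) : ZMod p)
      = (2 * k + 3) * b * (genTrinomial a b (k + 1) : ZMod p)
      - (k + 1) * ((b : ZMod p) ^ 2 - 4 * a ^ 2) * (genTrinomial a b k : ZMod p) := by
  have := congrArg (Int.cast : ℤ → ZMod p) (tri_rec a b k)
  push_cast at this
  exact this

lemma tri_unique (f : ℕ → ZMod p) (c : ZMod p) (h0 : f 0 = c) (h1 : f 1 = c * b)
    (hrec : ∀ k, k + 2 < p → ((k : ZMod p) + 2) * f (k + 2)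
      = (2 * k + 3) * b * f (k + 1) - (k + 1) * ((b : ZMod p) ^ 2 - 4 * a ^ 2) * f k)
    (n : ℕ) (hn : n < p) : f n = c * (genTrinomial a b n : ZMod p) := by
  induction n using Nat.strong_induction_on with
  | _ n ih =>
    match n, hn, ih with
    | 0, _, _ => simp [tri_zero, h0]
    | 1, _, _ => simp [tri_one, h1]
    | k + 2, hn, ih =>
      have e1 := ih (k + 1) (by omega) (by omega)
      have e0 := ih k (by omega) (by omega)
      have hk : ((k : ZMod p) + 2) ≠ 0 := by
        have : ((k + 2 : ℕ) : ZMod p) ≠ 0 := by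
          rw [Ne, ZMod.natCast_eq_zero_iff]
          exact Nat.not_dvd_of_pos_of_lt (by omega) hn
        exact_mod_cast this
      apply mul_left_cancel₀ hk
      rw [hrec k hn, e1, e0]
      have := tri_rec_cast p a b k
      linear_combination (-c) * this

lemma tri_refl1 (hp2 : 2 < p) : ((b : ZMod p) ^ 2 - 4 * a ^ 2) * (genTrinomial a b (p - 2) : ZMod p)
    = genTrinomial a b (p - 1) * b := by
  obtain ⟨s, hs⟩ : ∃ s, p = s + 2 := ⟨p - 2, by omega⟩
  have h := tri_rec_cast p a b s
  have hc : (s : ZMod p) + 2 = 0 := by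
    have := ZMod.natCast_self p
    conv at this => lhs; arg 1; rw [hs]
    exact_mod_cast this
  have e1 : p - 2 = s := by omega
  have e2 : p - 1 = s + 1 := by omega
  rw [e1, e2]
  have hs' : (s : ZMod p) = -2 := by linear_combination hc
  rw [hs'] at h
  linear_combination -h

lemma tri_refl (hp2 : 2 < p) (r : ℕ) (hr : r < p) :
    ((b : ZMod p) ^ 2 - 4 * a ^ 2) ^ r * (genTrinomial a b (p - 1 - r) : ZMod p)
    = genTrinomial a b (p - 1) * genTrinomial a b r := by
  refine tri_unique p a b (fun r => ((b : ZMod p) ^ 2 - 4 * a ^ 2) ^ r *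
    (genTrinomial a b (p - 1 - r) : ZMod p)) _ (by simp) ?_ ?_ r hr
  · have := tri_refl1 p a b hp2
    simpa [Nat.sub_sub] using this
  · intro k hk
    obtain ⟨s, hs⟩ : ∃ s, p = k + s + 3 := ⟨p - 3 - k, by omega⟩
    have h := tri_rec_cast p a b s
    have hc : (s : ZMod p) = - k - 3 := by
      have : ((k + s + 3 : ℕ) : ZMod p) = 0 := by
        rw [← hs]; exact ZMod.natCast_self p
      push_cast at this
      linear_combination this
    have e1 : p - 1 - (k + 2) = s := by omega
    have e2 : p - 1 - (k + 1) = s + 1 := by omega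
    have e3 : p - 1 - k = s + 2 := by omega
    simp only [e1, e2, e3]
    rw [hc] at h
    linear_combination (-((b : ZMod p) ^ 2 - 4 * a ^ 2) ^ (k + 1)) * h

lemma tri_last (hp2 : 2 < p) : (genTrinomial a b (p - 1) : ZMod p)
    = ((b : ZMod p) ^ 2 - 4 * a ^ 2) ^ ((p - 1) / 2) := by
  obtain ⟨h, hh⟩ : ∃ h, p = 2 * h + 1 := hp.out.odd_of_ne_two (by omega)
  have e1 : (p - 1) / 2 = h := by omega
  have e2 : p - 1 = 2 * h := by omega
  obtain ⟨g, hg⟩ : ∃ g, h = g + 1 := ⟨h - 1, by omega⟩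
  have hc : 2 * (h : ZMod p) + 1 = 0 := by
    have : ((2 * h + 1 : ℕ) : ZMod p) = 0 := by
      rw [← hh]; exact ZMod.natCast_self p
    exact_mod_cast this
  rw [e1, e2]
  set B : ZMod p := (b : ZMod p) with hB
  set D : ZMod p := B ^ 2 - 4 * a ^ 2 with hD
  set Q : (ZMod p)[X] := 1 - C (2 * B) * X + C D * X ^ 2 with hQ
  have hdQ : derivative Q = C (2 * D) * X - C (2 * B) := by
    simp [hQ, map_ofNat (C : ZMod p →+* (ZMod p)[X]) 2]; ring
  have hde : 2 * (derivative (Q ^ h) - C (2 * B) * (derivative (Q ^ h) * X)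
      + C D * (derivative (Q ^ h) * X ^ 2)) = C (2 * B) * Q ^ h - C (2 * D) * (Q ^ h * X) := by
    have hC : 2 * (C (h : ZMod p)) + 1 = (0 : (ZMod p)[X]) := by
      have := congrArg (C : ZMod p → (ZMod p)[X]) hc
      simpa [map_ofNat (C : ZMod p →+* (ZMod p)[X]) 2] using this
    have : 2 * (Q * derivative (Q ^ h)) = C (2 * B) * Q ^ h - C (2 * D) * (Q ^ h * X) := by
      rw [derivative_pow, hdQ]
      have : Q * Q ^ (h - 1) = Q ^ h := by
        rw [← pow_succ', Nat.sub_add_cancel (by omega)]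
      linear_combination (2 * C (h : ZMod p) * (C (2 * D) * X - C (2 * B))) * this
        + (C (2 * D) * X - C (2 * B)) * Q ^ h * hC
    rw [← this, hQ]; ring
  have h2 : (2 : ZMod p) ≠ 0 := by
    intro h0
    rw [h0] at hc
    simp at hc
  have key : (Q ^ h).coeff (2 * h) = 1 * (genTrinomial a b (2 * h) : ZMod p) := by
    refine tri_unique p a b (fun n => (Q ^ h).coeff n) 1 ?_ ?_ ?_ (2 * h) (by omega)
    · simp [coeff_zero_eq_eval_zero, hQ]
    · have h3 := congrArg (fun q => coeff q 0) hde
      have h4 : (Q ^ h).coeff 0 = 1 := by simp [coeff_zero_eq_eval_zero, hQ]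
      simp [coeff_derivative, h4, mul_coeff_zero] at h3
      rcases h3 with h3 | h3
      · rw [h3, one_mul]
      · exact absurd h3 h2
    · intro k hk
      have h3 := congrArg (fun q => coeff q (k + 1)) hde
      apply mul_left_cancel₀ h2
      have h5 : (derivative (Q ^ h) * X ^ 2).coeff (k + 1) = (Q ^ h).coeff k * k := by
        rcases k with _ | k
        · simp [coeff_mul_X_pow']
        · rw [coeff_mul_X_pow, coeff_derivative]; push_cast; ring
      rw [show (2 : (ZMod p)[X]) = C 2 from rfl] at h3
      simp only [coeff_C_mul, coeff_add, coeff_sub, coeff_mul_X, h5, coeff_derivative] at h3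
      push_cast at h3
      linear_combination h3
  rw [one_mul] at key
  rw [← key]
  have hq2 : Q.natDegree ≤ 2 := by rw [hQ]; compute_degree
  rw [mul_comm 2 h, coeff_pow_of_natDegree_le hq2]
  congr 1
  simp [hQ, coeff_X, coeff_one]

end

theorem stmt10 (p : ℕ) (hp : p.Prime) (hp2 : 2 < p) (a b : ℤ)
    (hd : ¬ (p : ℤ) ∣ (b ^ 2 - 4 * a ^ 2)) :
    -- (i)
    (∀ N n₀ : ℕ, n₀ < p - 2 →
      2 * a ^ 2 * genMotzkin a b (N * p + n₀) ≡
        genTrinomial a b N * (2 * a ^ 2 * genMotzkin a b n₀) [ZMOD (p : ℤ)]) ∧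
    -- (ii)
    (∀ N k m : ℕ, m ≤ p - 2 →
      2 * a ^ 2 * genMotzkin a b (N * p ^ (k + 2) + m * p ^ (k + 1) + (p ^ (k + 1) - 2)) ≡
        genTrinomial a b N *
          (b * genTrinomial a b m * (genTrinomial a b (p - 1)) ^ (k + 1)
            - genTrinomial a b (m + 1)) [ZMOD (p : ℤ)]) ∧
    -- (iii)
    (∀ N k m : ℕ, m ≤ p - 2 →
      (b ^ 2 - 4 * a ^ 2) ^ ((p - 1) / 2) *
          (2 * a ^ 2 * genMotzkin a b (N * p ^ (k + 2) + m * p ^ (k + 1) + (p ^ (k + 1) - 1))) ≡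
        (b ^ 2 - 4 * a ^ 2) ^ (m + 1) * genTrinomial a b N *
          (b * genTrinomial a b (p - 2 - m)
            - (genTrinomial a b (p - 1)) ^ (k + 1) * genTrinomial a b (p - 2 - m + 1))
        [ZMOD (p : ℤ)]) := by
  haveI : Fact p.Prime := ⟨hp⟩
  have hM : ∀ n, (2 * (a : ZMod p) ^ 2 * (genMotzkin a b n : ZMod p)) =
      2 * b * (genTrinomial a b (n + 1) : ZMod p) - (genTrinomial a b (n + 2) : ZMod p)
      - ((b : ZMod p) ^ 2 - 4 * a ^ 2) * (genTrinomial a b n : ZMod p) := by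
    intro n
    exact_mod_cast congrArg (Int.cast : ℤ → ZMod p) (motz_eq a b n)
  have hL := tri_lucas p a b
  refine ⟨?_, ?_, ?_⟩
  · intro N n₀ hn
    rw [← ZMod.intCast_eq_intCast_iff]
    push_cast
    rw [hM, hM, add_assoc, add_assoc, hL _ _ (by omega), hL _ _ (by omega), hL _ _ (by omega)]
    ring
  · intro N k m hm
    rw [← ZMod.intCast_eq_intCast_iff]
    push_cast
    have hp1 : p ≤ p ^ (k + 1) := Nat.le_self_pow (by omega) p
    have hpk : 1 ≤ p ^ k := Nat.one_le_pow _ _ (by omega)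
    set n := N * p ^ (k + 2) + m * p ^ (k + 1) + (p ^ (k + 1) - 2) with hn
    have e0 : n = ((N * p + m) * p ^ k + (p ^ k - 1)) * p + (p - 2) := by
      have h1 : 2 ≤ p ^ (k + 1) := by omega
      have h2 : 2 ≤ p := by omega
      rw [hn]; zify [h1, h2, hpk]; ring
    have e1 : n + 1 = (N * p + m) * p ^ (k + 1) + (p ^ (k + 1) - 1) := by
      have h1 : 2 ≤ p ^ (k + 1) := by omega
      have h2 : 1 ≤ p ^ (k + 1) := by omega
      rw [hn]; zify [h1, h2]; ring
    have e2 : n + 2 = (N * p + (m + 1)) * p ^ (k + 1) := by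
      have h1 : 2 ≤ p ^ (k + 1) := by omega
      rw [hn]; zify [h1]; ring
    rw [hM, e1, e2, e0, tri_nines, tri_shift, hL _ (p - 2) (by omega), tri_nines,
      hL _ m (by omega), hL _ (m + 1) (by omega)]
    have := tri_refl1 p a b hp2
    linear_combination (-(genTrinomial a b N : ZMod p) * genTrinomial a b m *
      (genTrinomial a b (p - 1) : ZMod p) ^ k) * this
  · intro N k m hm
    rw [← ZMod.intCast_eq_intCast_iff]
    push_cast
    have hp1 : p ≤ p ^ (k + 1) := Nat.le_self_pow (by omega) p
    set n := N * p ^ (k + 2) + m * p ^ (k + 1) + (p ^ (k + 1) - 1) with hn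
    have h1 : 1 ≤ p ^ (k + 1) := by omega
    have e0 : n = (N * p + m) * p ^ (k + 1) + (p ^ (k + 1) - 1) := by
      rw [hn]; ring
    have e1 : n + 1 = (N * p + (m + 1)) * p ^ (k + 1) := by
      rw [hn]; zify [h1]; ring
    have e2 : n + 2 = ((N * p + (m + 1)) * p ^ k) * p + 1 := by
      rw [hn]; zify [h1]; ring
    rw [hM, e1, e2, e0, tri_nines, tri_shift, hL _ 1 (by omega), tri_shift,
      hL _ m (by omega), hL _ (m + 1) (by omega), tri_one]
    have r0 := tri_refl p a b hp2 m (by omega)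
    have r1 := tri_refl p a b hp2 (m + 1) (by omega)
    have hl := tri_last p a b hp2
    rw [show p - 1 - m = p - 2 - m + 1 by omega] at r0
    rw [show p - 1 - (m + 1) = p - 2 - m by omega] at r1
    rw [← hl]
    linear_combination ((genTrinomial a b N : ZMod p) * ((b : ZMod p) ^ 2 - 4 * a ^ 2) *
      (genTrinomial a b (p - 1) : ZMod p) ^ (k + 1)) * r0 - (genTrinomial a b N : ZMod p) * b * r1
end

section
/- Let p > 2 be a prime and a, b integers with p ∤ a, assume p does not divide T^{a,b}_n for any n < p, and assume that the residues {T^{a,b}_n mod p : n < p} generate the multiplicative group (ℤ/pℤ)^×. Then for every k with 1 ≤ k ≤ p−1, the natural density of {n ∈ ℕ : M^{a,b}_n ≡ k (mod p)} exists and equals (1 − D₀)/(p−1), where D₀ is the natural density of {n ∈ ℕ : p ∣ M^{a,b}_n} (which exists). -/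
open Polynomial Filter

def MBd (F : ℕ → ℂ) (C : ℝ) : Prop :=
  ∀ ε : ℝ, 0 < ε → ∀ᶠ N : ℕ in atTop, ‖∑ n ∈ Finset.range N, F n‖ ≤ (C + ε) * N

def Mean (F : ℕ → ℂ) (L : ℂ) : Prop :=
  Tendsto (fun N : ℕ => (∑ n ∈ Finset.range N, F n) / (N : ℂ)) atTop (nhds L)

lemma mean_zero_iff (F : ℕ → ℂ) : Mean F 0 ↔ MBd F 0 := by
  unfold Mean MBd
  rw [Metric.tendsto_nhds]
  constructor
  · intro h ε hε
    filter_upwards [h ε hε, eventually_gt_atTop 0] with N hN hN0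
    have hN' : (0:ℝ) < N := by exact_mod_cast hN0
    rw [dist_zero_right, norm_div, Complex.norm_natCast, div_lt_iff₀ hN'] at hN
    linarith
  · intro h ε hε
    filter_upwards [h (ε / 2) (by positivity), eventually_gt_atTop 0] with N hN hN0
    have hN' : (0:ℝ) < N := by exact_mod_cast hN0
    rw [dist_zero_right, norm_div, Complex.norm_natCast, div_lt_iff₀ hN']
    nlinarith

lemma Mean.add {F G : ℕ → ℂ} {L M : ℂ} (hF : Mean F L) (hG : Mean G M) :
    Mean (fun n => F n + G n) (L + M) := by
  unfold Mean at *
  refine (hF.add hG).congr fun N => ?_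
  rw [Finset.sum_add_distrib, add_div]

lemma Mean.const_mul {F : ℕ → ℂ} {L : ℂ} (c : ℂ) (hF : Mean F L) :
    Mean (fun n => c * F n) (c * L) := by
  unfold Mean at *
  refine (Tendsto.const_mul c hF).congr fun N => ?_
  rw [← Finset.mul_sum, mul_div_assoc]

lemma Mean.sum {ι : Type*} (s : Finset ι) {F : ι → ℕ → ℂ} {L : ι → ℂ}
    (hF : ∀ i ∈ s, Mean (F i) (L i)) :
    Mean (fun n => ∑ i ∈ s, F i n) (∑ i ∈ s, L i) := by
  unfold Mean at *
  refine (tendsto_finsetSum s hF).congr fun N => ?_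
  rw [Finset.sum_comm, Finset.sum_div]

lemma mean_const (c : ℂ) : Mean (fun _ => c) c := by
  unfold Mean
  refine tendsto_const_nhds.congr' ?_
  filter_upwards [eventually_gt_atTop 0] with N hN
  have : (N:ℂ) ≠ 0 := by exact_mod_cast hN.ne'
  simp only [Finset.sum_const, Finset.card_range, nsmul_eq_mul]
  field_simp

lemma MBd.add {F G : ℕ → ℂ} {C D : ℝ} (hF : MBd F C) (hG : MBd G D) :
    MBd (fun n => F n + G n) (C + D) := by
  intro ε hε
  filter_upwards [hF (ε/2) (by positivity), hG (ε/2) (by positivity)] with N h1 h2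
  rw [Finset.sum_add_distrib]
  refine (norm_add_le _ _).trans ?_
  nlinarith

lemma MBd.const_mul {F : ℕ → ℂ} {C ρ : ℝ} (hC : 0 ≤ C) (σ : ℂ) (hσ : ‖σ‖ ≤ ρ) (hF : MBd F C) :
    MBd (fun n => σ * F n) (ρ * C) := by
  intro ε hε
  have hρ : 0 ≤ ρ := (norm_nonneg _).trans hσ
  filter_upwards [hF (ε/(ρ+1)) (by positivity)] with N h1
  rw [← Finset.mul_sum, norm_mul]
  calc ‖σ‖ * ‖∑ n ∈ Finset.range N, F n‖ ≤ ρ * ((C + ε/(ρ+1)) * N) := by gcongr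
    _ = (ρ * C + ρ * (ε / (ρ+1))) * N := by ring
    _ ≤ (ρ * C + ε) * N := by
      gcongr
      rw [← mul_div_assoc, div_le_iff₀ (by positivity)]
      nlinarith

lemma sum_blocks (p : ℕ) (F : ℕ → ℂ) (M : ℕ) :
    ∑ n ∈ Finset.range (p * M), F n
      = ∑ m ∈ Finset.range M, ∑ r ∈ Finset.range p, F (p * m + r) := by
  induction M with
  | zero => simp
  | succ M ih => rw [Finset.sum_range_succ, ← ih, mul_add, mul_one, Finset.sum_range_add]

lemma MBd.block {p : ℕ} (hp : 0 < p) {F : ℕ → ℂ} {K C : ℝ} (hC : 0 ≤ C) (hK : ∀ n, ‖F n‖ ≤ K)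
    (h : MBd (fun m => ∑ r ∈ Finset.range p, F (p * m + r)) C) : MBd F (C / p) := by
  intro ε hε
  have hp' : (0:ℝ) < p := by exact_mod_cast hp
  have h1 := (Nat.tendsto_div_const_atTop hp.ne').eventually (h (p * (ε/2)) (by positivity))
  have h2 := (tendsto_natCast_atTop_atTop (R := ℝ)).eventually_ge_atTop (p * K / (ε/2))
  have hK0 : 0 ≤ K := (norm_nonneg _).trans (hK 0)
  filter_upwards [h1, h2] with N h1 h2
  rw [div_le_iff₀ (by positivity)] at h2
  rw [← sum_blocks] at h1
  have e : N = p * (N / p) + N % p := (Nat.div_add_mod N p).symm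
  have hM : (p:ℝ) * ((N / p : ℕ) : ℝ) ≤ N := by
    exact_mod_cast Nat.mul_div_le N p
  have h3 : ‖∑ r ∈ Finset.range (N % p), F (p * (N / p) + r)‖ ≤ p * K := by
    refine (norm_sum_le _ _).trans ((Finset.sum_le_sum fun i _ => hK _).trans ?_)
    simp only [Finset.sum_const, Finset.card_range, nsmul_eq_mul]
    gcongr
    exact (Nat.mod_lt _ hp).le
  have h4 : ∑ n ∈ Finset.range N, F n = ∑ n ∈ Finset.range (p * (N / p)), F n
      + ∑ r ∈ Finset.range (N % p), F (p * (N / p) + r) := by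
    rw [← Finset.sum_range_add, ← e]
  rw [h4]
  refine (norm_add_le _ _).trans ?_
  calc _ ≤ (C + p * (ε/2)) * ((N / p : ℕ) : ℝ) + p * K := add_le_add h1 h3
    _ = (C / p + ε/2) * (p * ((N / p : ℕ) : ℝ)) + p * K := by field_simp
    _ ≤ (C / p + ε/2) * N + N * (ε/2) := by gcongr
    _ = _ := by ring

lemma contraction {S : Type*} {p : ℕ} (hp : 0 < p) (F E : S → ℕ → ℂ) (st : S → S) (σ : S → ℂ)
    {K ρ : ℝ} (hρp : ρ < p) (hσ : ∀ s, ‖σ s‖ ≤ ρ) (hK : ∀ s n, ‖F s n‖ ≤ K)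
    (hE : ∀ s, Mean (E s) 0)
    (h : ∀ s m, ∑ r ∈ Finset.range p, F s (p * m + r) = E s m + σ s * F (st s) m) :
    ∀ s, Mean (F s) 0 := by
  intro s0
  have hρ : 0 ≤ ρ := (norm_nonneg _).trans (hσ s0)
  have hK0 : 0 ≤ K := (norm_nonneg _).trans (hK s0 0)
  have hp' : (0:ℝ) < p := by exact_mod_cast hp
  have key : ∀ k : ℕ, ∀ s, MBd (F s) ((ρ / p) ^ k * K) := by
    intro k
    induction k with
    | zero =>
      intro s ε hε
      refine Eventually.of_forall fun N => ?_
      refine (norm_sum_le _ _).trans ((Finset.sum_le_sum fun i _ => hK s _).trans ?_)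
      simp only [Finset.sum_const, Finset.card_range, nsmul_eq_mul]
      have : (0:ℝ) ≤ N := by positivity
      nlinarith
    | succ k ih =>
      intro s
      have h0 : 0 ≤ (ρ / p) ^ k * K := by positivity
      have h1 := ((mean_zero_iff _).1 (hE s)).add ((ih (st s)).const_mul h0 (σ s) (hσ s))
      have h2 : MBd (F s) ((ρ * ((ρ / p) ^ k * K)) / p) :=
        MBd.block (p := p) hp (by positivity) (hK s) (by
          simp only [h]; simpa using h1)
      convert h2 using 1
      rw [pow_succ]
      ring
  rw [mean_zero_iff]
  intro ε hε
  have ht : Tendsto (fun k : ℕ => (ρ / p) ^ k * K) atTop (nhds (0 * K)) :=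
    (tendsto_pow_atTop_nhds_zero_of_lt_one (by positivity) ((div_lt_one hp').2 hρp)).mul_const K
  rw [zero_mul] at ht
  obtain ⟨k, hk⟩ := (ht.eventually_lt_const (show (0:ℝ) < ε / 2 by positivity)).exists
  filter_upwards [key k s0 (ε/2) (by positivity)] with N hN
  refine hN.trans (mul_le_mul_of_nonneg_right ?_ (Nat.cast_nonneg N))
  linarith

lemma affine_mean {S : Type*} [Finite S] {p : ℕ} (hp : 1 < p) (F H : S → ℕ → ℂ) (st : S → S)
    (η : S → ℂ) (hK : ∀ s n, ‖F s n‖ ≤ 1) (hH : ∀ s, Mean (H s) (η s))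
    (h : ∀ s m, ∑ r ∈ Finset.range p, F s (p * m + r) = H s m + F (st s) m) :
    ∃ e : S → ℂ, (∀ s, Mean (F s) (e s)) ∧ ((∀ s, η s = 0) → ∀ s, e s = 0) := by
  have hp' : (1:ℝ) < p := by exact_mod_cast hp
  have hpC : (p:ℂ) ≠ 0 := by exact_mod_cast (by omega : p ≠ 0)
  let g : S → ℕ → ℂ := fun s j => η (st^[j] s) * ((p:ℂ)⁻¹) ^ (j+1)
  obtain ⟨B, hB⟩ : ∃ B, ∀ s, ‖η s‖ ≤ B := by
    obtain ⟨B, hB⟩ := (Set.finite_range (fun s => ‖η s‖)).bddAbove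
    exact ⟨B, fun s => hB ⟨s, rfl⟩⟩
  have hsum : ∀ s, Summable (g s) := by
    intro s
    have : Summable (fun j : ℕ => B * ((p:ℝ)⁻¹) ^ (j+1)) := by
      apply Summable.mul_left
      exact (summable_nat_add_iff 1).2
        (summable_geometric_of_lt_one (by positivity) (inv_lt_one_of_one_lt₀ hp'))
    refine Summable.of_norm_bounded this fun j => ?_
    simp only [g, norm_mul, norm_pow, norm_inv, Complex.norm_natCast]
    gcongr
    exact hB _
  let e : S → ℂ := fun s => ∑' j, g s j
  have he : ∀ s, p * e s = η s + e (st s) := by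
    intro s
    simp only [e]
    rw [(hsum s).tsum_eq_zero_add, mul_add, ← tsum_mul_left]
    congr 1
    · simp only [g, Function.iterate_zero, id, zero_add, pow_one]
      field_simp
    · refine tsum_congr fun j => ?_
      simp only [g, Function.iterate_succ, Function.comp]
      rw [pow_succ _ (j+1)]
      field_simp
  refine ⟨e, fun s => ?_, fun h0 s => by simp [e, g, h0]⟩
  obtain ⟨B', hB'⟩ : ∃ B, ∀ s, ‖e s‖ ≤ B := by
    obtain ⟨B, hB⟩ := (Set.finite_range (fun s => ‖e s‖)).bddAbove
    exact ⟨B, fun s => hB ⟨s, rfl⟩⟩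
  have := contraction (S := S) (p := p) (by omega) (fun s n => F s n + (- e s))
    (fun s m => H s m + (- η s)) st (fun _ => 1) (K := 1 + B') (ρ := 1) hp' (by simp)
    (fun s n => (norm_add_le _ _).trans (add_le_add (hK s n) (by rw [norm_neg]; exact hB' s)))
    (fun s => by simpa using (hH s).add (mean_const (- η s)))
    (fun s m => by
      rw [Finset.sum_add_distrib, h]
      simp only [Finset.sum_const, Finset.card_range, nsmul_eq_mul]
      linear_combination - he s) s
  simpa using this.add (mean_const (e s))

lemma coeff_expand_mul' {p : ℕ} (hp : 0 < p) (A G : (ZMod p)[X]) (m r : ℕ) (hr : r < p)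
    (hG : G.natDegree < r + 2 * p) :
    (expand (ZMod p) p A * G).coeff (p * m + r)
      = A.coeff m * G.coeff r + (A * X).coeff m * G.coeff (r + p) := by
  induction A using Polynomial.induction_on' with
  | add f g hf hg =>
    simp only [map_add, add_mul, coeff_add, hf, hg]; ring
  | monomial i c =>
    rw [expand_monomial, ← C_mul_X_pow_eq_monomial, ← C_mul_X_pow_eq_monomial, mul_assoc, mul_assoc,
      ← pow_succ, coeff_C_mul, coeff_C_mul, coeff_C_mul, coeff_X_pow_mul', coeff_X_pow, coeff_X_pow]
    rcases lt_trichotomy m i with h | h | h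
    · have : p * (m + 1) ≤ p * i := Nat.mul_le_mul_left _ h
      rw [mul_add] at this
      rw [if_neg (by nlinarith), if_neg h.ne, if_neg (by omega)]
      simp
    · subst h
      rw [if_pos (by nlinarith), if_pos rfl, if_neg (by omega)]
      have : p * m + r - m * p = r := by rw [mul_comm m p]; omega
      rw [this]; ring
    · rw [if_pos (by nlinarith), if_neg h.ne']
      obtain ⟨d, rfl⟩ := Nat.exists_eq_add_of_lt h
      have e : p * (i + d + 1) + r - i * p = r + (d + 1) * p := by
        have : p * (i + d + 1) + r = (r + (d + 1) * p) + i * p := by ring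
        omega
      rw [e]
      rcases d with _ | d
      · simp
      · rw [if_neg (by omega), coeff_eq_zero_of_natDegree_lt]
        · simp
        · nlinarith

noncomputable def WW {p : ℕ} (P Q : (ZMod p)[X]) (n : ℕ) : ZMod p := (P ^ n * Q).coeff n

lemma WW_split {p : ℕ} [Fact p.Prime] (P Q : (ZMod p)[X]) (hP : P.natDegree ≤ 2)
    (hQ : Q.natDegree ≤ 2) (m r : ℕ) (hr : r < p) :
    WW P Q (p * m + r) = WW P 1 m * (P ^ r * Q).coeff r
      + WW P X m * (P ^ r * Q).coeff (r + p) := by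
  have hp := (Fact.out : p.Prime).two_le
  have hd : (P ^ r * Q).natDegree ≤ 2 * r + 2 := by
    refine natDegree_mul_le.trans ?_
    have := natDegree_pow_le_of_le r hP
    omega
  unfold WW
  rw [pow_add, mul_comm p m, pow_mul, ← ZMod.expand_card, mul_assoc, mul_comm m p,
    coeff_expand_mul' (by omega) _ _ _ _ hr (by omega), mul_one]

lemma T_split {p : ℕ} [Fact p.Prime] (P : (ZMod p)[X]) (hP : P.natDegree ≤ 2)
    (m r : ℕ) (hr : r < p) : WW P 1 (p * m + r) = WW P 1 m * WW P 1 r := by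
  rw [WW_split P 1 hP (by simp) m r hr]
  have : (P ^ r * 1).coeff (r + p) = 0 := by
    apply coeff_eq_zero_of_natDegree_lt
    rw [mul_one]
    have := natDegree_pow_le_of_le r hP
    omega
  rw [this]; simp [WW]

lemma V_split {p : ℕ} [Fact p.Prime] (P : (ZMod p)[X]) (hP : P.natDegree ≤ 2)
    (m r : ℕ) (hr : r + 1 < p) : WW P X (p * m + r) = WW P 1 m * WW P X r := by
  rw [WW_split P X hP (by rw [natDegree_X]; omega) m r (by omega)]
  have : (P ^ r * X).coeff (r + p) = 0 := by
    apply coeff_eq_zero_of_natDegree_lt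
    have := natDegree_pow_le_of_le r hP
    have h2 := natDegree_mul_le (p := P ^ r) (q := X)
    rw [natDegree_X] at h2
    omega
  rw [this]; simp [WW]

lemma T_ne_zero {p : ℕ} [Fact p.Prime] (P : (ZMod p)[X]) (hP : P.natDegree ≤ 2)
    (hT : ∀ n < p, WW P 1 n ≠ 0) (n : ℕ) : WW P 1 n ≠ 0 := by
  have hp := (Fact.out : p.Prime).two_le
  induction n using Nat.strong_induction_on with
  | _ n ih =>
    by_cases h : n < p
    · exact hT n h
    · rw [← Nat.div_add_mod n p, T_split P hP _ _ (Nat.mod_lt _ (by omega))]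
      exact mul_ne_zero (ih _ (Nat.div_lt_self (by omega) (by omega)))
        (hT _ (Nat.mod_lt _ (by omega)))

lemma norm_one_add_lt {z : ℂ} (h : ‖z‖ ≤ 1) (h1 : z ≠ 1) : ‖1 + z‖ < 2 := by
  by_contra hc
  push Not at hc
  have e1 : ‖z‖ ^ 2 = z.re * z.re + z.im * z.im := by
    rw [← Complex.normSq_eq_norm_sq, Complex.normSq_apply]
  have e2 : ‖1 + z‖ ^ 2 = (1 + z.re) * (1 + z.re) + z.im * z.im := by
    rw [← Complex.normSq_eq_norm_sq, Complex.normSq_apply]; simp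
  have h3 : ‖z‖ ^ 2 ≤ 1 := pow_le_one₀ (norm_nonneg _) h
  have h4 : 2 ^ 2 ≤ ‖1 + z‖ ^ 2 := by gcongr
  have h5 : 1 ≤ z.re := by nlinarith
  have h6 : z.re = 1 := by nlinarith
  have h7 : z.im = 0 := by nlinarith
  exact h1 (Complex.ext h6 h7)

lemma mean_T {p : ℕ} [Fact p.Prime] (P : (ZMod p)[X]) (hP : P.natDegree ≤ 2)
    (hT : ∀ n < p, WW P 1 n ≠ 0)
    (hgen : Subgroup.closure {u : (ZMod p)ˣ | ∃ n < p, (u : ZMod p) = WW P 1 n} = ⊤)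
    (χ : DirichletCharacter ℂ p) :
    ∃ τ : ℂ, Mean (fun n => χ (WW P 1 n)) τ ∧ (χ ≠ 1 → τ = 0) := by
  have hp := (Fact.out : p.Prime).two_le
  by_cases hχ : χ = 1
  · refine ⟨1, ?_, fun h => absurd hχ h⟩
    subst hχ
    convert mean_const 1 using 2 with n
    exact MulChar.one_apply (isUnit_iff_ne_zero.2 (T_ne_zero P hP hT n))
  refine ⟨0, ?_, fun _ => rfl⟩
  obtain ⟨r, hr, hr1⟩ : ∃ r < p, χ (WW P 1 r) ≠ 1 := by
    by_contra! hc
    apply hχ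
    ext u
    have hu : u ∈ Subgroup.closure {u : (ZMod p)ˣ | ∃ n < p, (u : ZMod p) = WW P 1 n} := by
      rw [hgen]; trivial
    have : Subgroup.closure {u : (ZMod p)ˣ | ∃ n < p, (u : ZMod p) = WW P 1 n}
        ≤ χ.toUnitHom.ker := by
      rw [Subgroup.closure_le]
      rintro u ⟨n, hn, hu⟩
      simp only [SetLike.mem_coe, MonoidHom.mem_ker]
      ext
      rw [MulChar.coe_toUnitHom, hu, hc n hn]; simp
    have h2 := this hu
    rw [MonoidHom.mem_ker] at h2
    rw [← MulChar.coe_toUnitHom, h2]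
    simp
  have h0 : WW P 1 0 = 1 := by simp [WW]
  have hr0 : r ≠ 0 := by rintro rfl; rw [h0, map_one] at hr1; exact hr1 rfl
  have hσ : ‖∑ r ∈ Finset.range p, χ (WW P 1 r)‖ < p := by
    rw [← Finset.add_sum_erase _ _ (Finset.mem_range.2 (by omega : 0 < p)),
      ← Finset.add_sum_erase _ _ (Finset.mem_erase.2 ⟨hr0, Finset.mem_range.2 hr⟩), ← add_assoc,
      h0, map_one]
    have h3 := norm_one_add_lt (χ.norm_le_one (WW P 1 r)) hr1
    have h4 : ‖∑ x ∈ ((Finset.range p).erase 0).erase r, χ (WW P 1 x)‖ ≤ (p:ℝ) - 2 := by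
      refine (norm_sum_le _ _).trans ((Finset.sum_le_sum fun i _ => χ.norm_le_one _).trans ?_)
      rw [Finset.sum_const, Finset.card_erase_of_mem
        (Finset.mem_erase.2 ⟨hr0, Finset.mem_range.2 hr⟩), Finset.card_erase_of_mem
        (Finset.mem_range.2 (by omega : 0 < p)), Finset.card_range, nsmul_eq_mul, mul_one,
        Nat.sub_sub, Nat.cast_sub hp]
      norm_num
    have := norm_add_le (1 + χ (WW P 1 r)) (∑ x ∈ ((Finset.range p).erase 0).erase r, χ (WW P 1 x))
    linarith
  refine contraction (S := Unit) (p := p) (by omega) (fun _ n => χ (WW P 1 n)) (fun _ _ => 0) id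
    (fun _ => ∑ r ∈ Finset.range p, χ (WW P 1 r)) hσ (fun _ => le_rfl)
    (fun _ n => χ.norm_le_one _) (fun _ => mean_const 0) (fun _ m => ?_) ()
  rw [zero_add, Finset.sum_mul]
  refine Finset.sum_congr rfl fun r hr => ?_
  rw [T_split P hP _ _ (Finset.mem_range.1 hr), map_mul, mul_comm]

lemma mean_state {p : ℕ} [Fact p.Prime] (P : (ZMod p)[X]) (hP : P.natDegree ≤ 2)
    (hT : ∀ n < p, WW P 1 n ≠ 0)
    (hgen : Subgroup.closure {u : (ZMod p)ˣ | ∃ n < p, (u : ZMod p) = WW P 1 n} = ⊤)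
    (χ : DirichletCharacter ℂ p) :
    ∃ e : ZMod p × ZMod p → ℂ, (∀ s, Mean (fun n => χ (s.1 * WW P 1 n + s.2 * WW P X n)) (e s)) ∧
      (χ ≠ 1 → ∀ s, e s = 0) := by
  have hp := (Fact.out : p.Prime).two_le
  obtain ⟨τ, hτ, hτ0⟩ := mean_T P hP hT hgen χ
  obtain ⟨e, he, he0⟩ := affine_mean (S := ZMod p × ZMod p) (p := p) (by omega)
    (fun s n => χ (s.1 * WW P 1 n + s.2 * WW P X n))
    (fun s m => (∑ r ∈ Finset.range (p - 1), χ (s.1 * WW P 1 r + s.2 * WW P X r)) * χ (WW P 1 m))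
    (fun s => (s.1 * WW P 1 (p - 1) + s.2 * WW P X (p - 1),
      s.2 * (P ^ (p - 1) * X).coeff (p - 1 + p)))
    (fun s => (∑ r ∈ Finset.range (p - 1), χ (s.1 * WW P 1 r + s.2 * WW P X r)) * τ)
    (fun s n => χ.norm_le_one _) (fun s => hτ.const_mul _) (fun s m => by
      have e1 : Finset.range p = Finset.range (p - 1 + 1) := by congr 1; omega
      rw [e1, Finset.sum_range_succ, Finset.sum_mul]
      congr 1
      · refine Finset.sum_congr rfl fun r hr => ?_
        rw [Finset.mem_range] at hr
        rw [T_split P hP _ _ (by omega), V_split P hP _ _ (by omega), ← map_mul]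
        congr 1; ring
      · rw [T_split P hP _ _ (by omega), WW_split P X hP (by rw [natDegree_X]; omega) _ _ (by omega)]
        congr 1
        simp only [WW]; ring)
  refine ⟨e, he, fun h => he0 fun s => ?_⟩
  rw [hτ0 h, mul_zero]

lemma mean_M {p : ℕ} [Fact p.Prime] (P Q : (ZMod p)[X]) (hP : P.natDegree ≤ 2)
    (hQ : Q.natDegree ≤ 2)
    (hT : ∀ n < p, WW P 1 n ≠ 0)
    (hgen : Subgroup.closure {u : (ZMod p)ˣ | ∃ n < p, (u : ZMod p) = WW P 1 n} = ⊤)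
    (χ : DirichletCharacter ℂ p) :
    ∃ e : ℂ, Mean (fun n => χ (WW P Q n)) e ∧ (χ ≠ 1 → e = 0) := by
  have hp := (Fact.out : p.Prime).two_le
  have hpC : (p:ℂ) ≠ 0 := by exact_mod_cast (by omega : p ≠ 0)
  obtain ⟨e, he, he0⟩ := mean_state P hP hT hgen χ
  let s : ℕ → ZMod p × ZMod p := fun r => ((P ^ r * Q).coeff r, (P ^ r * Q).coeff (r + p))
  let L : ℂ := ∑ r ∈ Finset.range p, e (s r)
  refine ⟨L / p, ?_, fun h => by simp [L, he0 h]⟩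
  have hE := (Mean.sum (Finset.range p) (fun r _ => he (s r))).add (mean_const (-L))
  have := contraction (S := Unit) (p := p) (by omega) (fun _ n => χ (WW P Q n) + (-(L / p)))
    (fun _ m => (∑ r ∈ Finset.range p, χ ((s r).1 * WW P 1 m + (s r).2 * WW P X m)) + -L) id
    (fun _ => 0) (K := 1 + ‖L / p‖) (ρ := 0) (by exact_mod_cast (by omega : 0 < p)) (by simp)
    (fun _ n => (norm_add_le _ _).trans (add_le_add (χ.norm_le_one _) (by rw [norm_neg])))
    (fun _ => by simpa [L] using hE)
    (fun _ m => by
      rw [Finset.sum_add_distrib, zero_mul, add_zero]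
      congr 1
      · refine Finset.sum_congr rfl fun r hr => ?_
        rw [WW_split P Q hP hQ _ _ (Finset.mem_range.1 hr)]
        congr 1; ring
      · simp only [Finset.sum_const, Finset.card_range, nsmul_eq_mul]
        field_simp) ()
  simpa using this.add (mean_const (L / p))

lemma density_of_mean (q : ℕ → Prop) [DecidablePred q] (F : ℕ → ℂ) (L : ℂ) (hF : Mean F L)
    (h : ∀ n, F n = if q n then 1 else 0) :
    Tendsto (fun N : ℕ => (((Finset.range N).filter q).card : ℝ) / N) atTop (nhds L.re) := by
  refine ((Complex.continuous_re.tendsto L).comp hF).congr fun N => ?_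
  simp only [Function.comp, h, Finset.sum_boole]
  rw [← Complex.ofReal_natCast, ← Complex.ofReal_natCast, ← Complex.ofReal_div, Complex.ofReal_re]

open scoped Classical in
theorem stmt14 (p : ℕ) (hp : p.Prime) (hp2 : 2 < p) (a b : ℤ) (ha : ¬ (p : ℤ) ∣ a)
    (hT : ∀ n < p, ¬ (p : ℤ) ∣ genTrinomial a b n)
    (hgen : Subgroup.closure
      {u : (ZMod p)ˣ | ∃ n < p, (u : ZMod p) = ((genTrinomial a b n : ℤ) : ZMod p)} = ⊤) :
    ∃ D₀ : ℝ,
      Tendsto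
        (fun N : ℕ =>
          (((Finset.range N).filter (fun n => (p : ℤ) ∣ genMotzkin a b n)).card : ℝ) / N)
        atTop (nhds D₀) ∧
      ∀ k : ℕ, 1 ≤ k → k ≤ p - 1 →
        Tendsto
          (fun N : ℕ =>
            (((Finset.range N).filter
              (fun n => genMotzkin a b n ≡ (k : ℤ) [ZMOD (p : ℤ)])).card : ℝ) / N)
          atTop (nhds ((1 - D₀) / ((p : ℝ) - 1))) := by
  have : Fact p.Prime := ⟨hp⟩
  let P : (ZMod p)[X] := C (a : ZMod p) + C (b : ZMod p) * X + C (a : ZMod p) * X ^ 2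
  let Q : (ZMod p)[X] := 1 - X ^ 2
  have hP : P.natDegree ≤ 2 := by simp only [P]; compute_degree
  have hQ : Q.natDegree ≤ 2 := by simp only [Q]; compute_degree
  have eP : (C a + C b * X + C a * X ^ 2 : ℤ[X]).map (Int.castRingHom (ZMod p)) = P := by
    simp [P]
  have eT : ∀ n, ((genTrinomial a b n : ℤ) : ZMod p) = WW P 1 n := by
    intro n
    simp only [genTrinomial, WW, mul_one]
    rw [← eP, ← Polynomial.map_pow, coeff_map]; simp
  have eM : ∀ n, ((genMotzkin a b n : ℤ) : ZMod p) = WW P Q n := by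
    intro n
    have eQ : (1 - X ^ 2 : ℤ[X]).map (Int.castRingHom (ZMod p)) = Q := by simp [Q]
    simp only [genMotzkin, WW]
    rw [← eP, ← eQ, ← Polynomial.map_pow, ← Polynomial.map_mul, coeff_map]; simp
  have hT' : ∀ n < p, WW P 1 n ≠ 0 := by
    intro n hn h
    apply hT n hn
    rw [← ZMod.intCast_zmod_eq_zero_iff_dvd, eT, h]
  simp only [eT] at hgen
  have hmean := fun χ => mean_M P Q hP hQ hT' hgen χ
  choose e he he0 using hmean
  have hpR : (2:ℝ) < p := by exact_mod_cast hp2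
  refine ⟨1 - (e 1).re, ?_, ?_⟩
  · have h1 := (mean_const 1).add ((he 1).const_mul (-1))
    have h2 := density_of_mean (fun n => (p : ℤ) ∣ genMotzkin a b n) _ _ h1 (fun n => by
      have hi : (p : ℤ) ∣ genMotzkin a b n ↔ WW P Q n = 0 := by
        rw [← ZMod.intCast_zmod_eq_zero_iff_dvd, eM]
      by_cases h : WW P Q n = 0
      · rw [if_pos (hi.2 h), h, MulChar.map_zero]; simp
      · rw [if_neg (mt hi.1 h), MulChar.one_apply (isUnit_iff_ne_zero.2 h)]; simp)
    convert h2 using 2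
    simp [sub_eq_add_neg]
  · intro k hk1 hk2
    have hk : (k : ZMod p) ≠ 0 := by
      intro h
      rw [ZMod.natCast_eq_zero_iff] at h
      have := Nat.le_of_dvd (by omega) h
      omega
    have hpc : ((p.totient : ℕ) : ℂ) ≠ 0 := by
      rw [Nat.totient_prime hp]; exact_mod_cast (by omega : p - 1 ≠ 0)
    have h1 := (Mean.sum (Finset.univ : Finset (DirichletCharacter ℂ p))
      (fun χ _ => (he χ).const_mul (χ (k : ZMod p)⁻¹))).const_mul ((p.totient : ℂ)⁻¹)
    have h2 := density_of_mean (fun n => genMotzkin a b n ≡ (k : ℤ) [ZMOD (p : ℤ)]) _ _ h1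
      (fun n => by
        have hi : genMotzkin a b n ≡ (k : ℤ) [ZMOD (p : ℤ)] ↔ WW P Q n = k := by
          rw [← ZMod.intCast_eq_intCast_iff, eM]
          push_cast
          rfl
        rw [DirichletCharacter.sum_char_inv_mul_char_eq ℂ (isUnit_iff_ne_zero.2 hk)]
        by_cases h : WW P Q n = k
        · rw [if_pos h.symm, if_pos (hi.2 h), inv_mul_cancel₀ hpc]
        · rw [if_neg (Ne.symm h), if_neg (mt hi.1 h), mul_zero])
    convert h2 using 2
    rw [Finset.sum_eq_single 1 (fun χ _ h => by rw [he0 χ h, mul_zero]) (by simp),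
      MulChar.one_apply (isUnit_iff_ne_zero.2 (inv_ne_zero hk)), one_mul, Nat.totient_prime hp,
      Nat.cast_sub (by omega)]
    have : ((p:ℂ) - (1:ℕ))⁻¹ = (((p:ℝ) - 1)⁻¹ : ℝ) := by push_cast; rfl
    rw [this, Complex.re_ofReal_mul, sub_sub_cancel, div_eq_inv_mul]
end

section
/- Let p > 2 be a prime such that p does not divide the central trinomial coefficient T_n for any n < p. Then the natural density of {n ∈ ℕ : p ∣ M_n} (where M_n is the n-th Motzkin number) exists and is at least 2/(p(p−1)). -/
open Polynomial Filter

/-- The central trinomial coefficient `T_n`: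
the coefficient of `X^n` in `(1 + X + X^2)^n`. -/
noncomputable def centralTrinomial (n : ℕ) : ℤ :=
  ((1 + X + X ^ 2 : Polynomial ℤ) ^ n).coeff n

/-- The Motzkin number `M_n`: the coefficient of `X^n` in `(1 + X + X^2)^n * (1 - X^2)`. -/
noncomputable def motzkin (n : ℕ) : ℤ :=
  (((1 + X + X ^ 2 : Polynomial ℤ) ^ n) * (1 - X ^ 2)).coeff n

def tt (R : Type) [CommRing R] : ℕ → ℤ → R
  | 0, k => if k = 0 then 1 else 0
  | n+1, k => tt R n (k-1) + tt R n k + tt R n (k+1)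

section comb
variable (R : Type) [CommRing R]

lemma tt_succ (n : ℕ) (k : ℤ) : tt R (n+1) k = tt R n (k-1) + tt R n k + tt R n (k+1) := rfl

lemma tt_zero (k : ℤ) : tt R 0 k = if k = 0 then 1 else 0 := rfl

lemma tt_symm (n : ℕ) (k : ℤ) : tt R n (-k) = tt R n k := by
  induction n generalizing k with
  | zero => simp [tt_zero]
  | succ n ih =>
    rw [tt_succ, tt_succ, ← ih (k-1), ← ih (k+1), ih k, show -k - 1 = -(k+1) by ring,
      show -k + 1 = -(k-1) by ring]
    ring

lemma tt_vanish (n : ℕ) (k : ℤ) (h : (n : ℤ) < k) : tt R n k = 0 := by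
  induction n generalizing k with
  | zero => rw [tt_zero, if_neg]; push_cast at h; omega
  | succ n ih =>
    push_cast at h
    rw [tt_succ, ih _ (by omega), ih _ (by omega), ih _ (by omega)]; ring

lemma tt_vanish' (n : ℕ) (k : ℤ) (h : k < -(n : ℤ)) : tt R n k = 0 := by
  rw [← tt_symm]; exact tt_vanish R n _ (by omega)

lemma tt_top (n : ℕ) : tt R n n = 1 := by
  induction n with
  | zero => simp [tt_zero]
  | succ n ih =>
    push_cast
    rw [tt_succ, tt_vanish R n (n+1) (by omega), tt_vanish R n (n+1+1) (by omega),
      show (n : ℤ) + 1 - 1 = n by ring, ih]; ring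

lemma tt_deriv (n : ℕ) (k : ℤ) :
    (k : R) * tt R (n+1) k = (n+1) * (tt R n (k-1) - tt R n (k+1)) := by
  induction n generalizing k with
  | zero =>
    rw [tt_succ]
    simp only [tt_zero]
    by_cases h1 : k = 1
    · subst h1; norm_num
    by_cases h2 : k = -1
    · subst h2; norm_num
    by_cases h3 : k = 0
    · subst h3; norm_num
    rw [if_neg (by omega), if_neg (by omega), if_neg (by omega)]; simp
  | succ n ih =>
    have e1 := ih (k-1)
    have e2 := ih k
    have e3 := ih (k+1)
    rw [tt_succ R (n+1) k]
    have f1 := tt_succ R n (k-1)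
    have f2 := tt_succ R n (k+1)
    have g1 : k - 1 + 1 = k := by ring
    have g2 : k + 1 - 1 = k := by ring
    rw [g1] at e1 f1
    rw [g2] at e3 f2
    push_cast at e1 e3 ⊢
    linear_combination e1 + e2 + e3 - (n+1) * f1 + (n+1) * f2

lemma tt_b (n : ℕ) : tt R (n+1) 0 = tt R n 0 + 2 * tt R n 1 := by
  rw [tt_succ]
  have := tt_symm R n 1
  norm_num at this ⊢
  rw [this]; ring

lemma tt_b2 (n : ℕ) : tt R (n+1) 1 = tt R n 0 + tt R n 1 + tt R n 2 := by
  rw [tt_succ]; norm_num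

lemma tt_mot (n : ℕ) :
    2 * (tt R n 0 - tt R n 2) = 3 * tt R n 0 + 2 * tt R (n+1) 0 - tt R (n+2) 0 := by
  rw [tt_b R (n+1), tt_b R n, tt_b2]; ring

lemma tt_rec (n : ℕ) :
    (n+2 : R) * tt R (n+2) 0 = (2*n+3) * tt R (n+1) 0 + 3 * (n+1) * tt R n 0 := by
  have h := tt_deriv R n 1
  norm_num at h
  have h1 := tt_b R (n+1)
  have h2 := tt_b R n
  have h3 := tt_b2 R n
  rw [show n + 1 + 1 = n + 2 by ring] at h1
  linear_combination (n+2:R) * h1 + (-n - 1 : R) * h2 + 2 * (n+1) * h3 + 2 * h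

lemma tt_coeff (n : ℕ) (j : ℕ) :
    ((1 + X + X ^ 2 : Polynomial R) ^ n).coeff j = tt R n ((j:ℤ) - n) := by
  induction n generalizing j with
  | zero => simp [tt_zero, Polynomial.coeff_one]
  | succ n ih =>
    rw [pow_succ, mul_add, mul_add, Polynomial.coeff_add, Polynomial.coeff_add, mul_one, ih, tt_succ, coeff_mul_X_pow',
      ← pow_one (X : Polynomial R), coeff_mul_X_pow', pow_one]
    push_cast
    have g1 : (j : ℤ) - (n+1) + 1 = j - n := by ring
    rw [g1]
    have a1 : (if 1 ≤ j then ((1 + X + X ^ 2 : Polynomial R) ^ n).coeff (j-1) else 0)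
        = tt R n ((j:ℤ) - (n+1)) := by
      split_ifs with h
      · rw [ih]; congr 1; omega
      · rw [tt_vanish']; omega
    have a2 : (if 2 ≤ j then ((1 + X + X ^ 2 : Polynomial R) ^ n).coeff (j-2) else 0)
        = tt R n ((j:ℤ) - (n+1) - 1) := by
      split_ifs with h
      · rw [ih]; congr 1; omega
      · rw [tt_vanish']; omega
    rw [a1, a2]; ring

lemma tt_cast (n : ℕ) (k : ℤ) : ((tt ℤ n k : ℤ) : R) = tt R n k := by
  induction n generalizing k with
  | zero => simp [tt_zero]
  | succ n ih => simp only [tt_succ]; push_cast; rw [ih, ih, ih]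

end comb

lemma central_eq (n : ℕ) : centralTrinomial n = tt ℤ n 0 := by
  rw [centralTrinomial, tt_coeff]; simp

lemma motzkin_eq (n : ℕ) : motzkin n = tt ℤ n 0 - tt ℤ n 2 := by
  rw [motzkin, mul_sub, mul_one, Polynomial.coeff_sub, tt_coeff, coeff_mul_X_pow', ← tt_symm ℤ n 2]
  congr 1
  · simp
  · split_ifs with h
    · rw [tt_coeff]; congr 1; omega
    · rw [tt_vanish']; omega

section frob
variable (p : ℕ) [hp : Fact p.Prime]

def shA : Module.End (ZMod p) (ℤ → ZMod p) where
  toFun f := fun k => f (k-1)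
  map_add' _ _ := rfl
  map_smul' _ _ := rfl

def shB : Module.End (ZMod p) (ℤ → ZMod p) where
  toFun f := fun k => f (k+1)
  map_add' _ _ := rfl
  map_smul' _ _ := rfl

lemma shA_pow (m : ℕ) (f : ℤ → ZMod p) (k : ℤ) : ((shA p)^m) f k = f (k - m) := by
  induction m generalizing k with
  | zero => simp
  | succ m ih =>
    rw [pow_succ']
    change ((shA p)^m) f (k-1) = _
    rw [ih]; congr 1; push_cast; ring

lemma shB_pow (m : ℕ) (f : ℤ → ZMod p) (k : ℤ) : ((shB p)^m) f k = f (k + m) := by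
  induction m generalizing k with
  | zero => simp
  | succ m ih =>
    rw [pow_succ']
    change ((shB p)^m) f (k+1) = _
    rw [ih]; congr 1; push_cast; ring

lemma tt_op (n m : ℕ) : tt (ZMod p) (n+m) = ((shA p + 1 + shB p)^m) (tt (ZMod p) n) := by
  induction m with
  | zero => simp
  | succ m ih =>
    rw [pow_succ', Module.End.mul_apply, ← ih]
    rfl

lemma tt_frob (n : ℕ) (k : ℤ) : tt (ZMod p) (n+p) k
    = tt (ZMod p) n (k-p) + tt (ZMod p) n k + tt (ZMod p) n (k+p) := by
  have : CharP (Module.End (ZMod p) (ℤ → ZMod p)) p := by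
    refine ⟨fun x => ?_⟩
    rw [← CharP.cast_eq_zero_iff (ZMod p) p x]
    constructor
    · intro h
      have h2 := congrFun (LinearMap.congr_fun h (fun _ => (1 : ZMod p))) 0
      simpa using h2
    · intro h
      ext f k
      simp [h]
  have hc : Commute (shA p) (shB p) := by
    refine LinearMap.ext fun f => funext fun k => ?_
    change f (k-1+1) = f (k+1-1)
    congr 1; ring
  rw [tt_op, add_pow_char_of_commute p (Commute.add_left hc (Commute.one_left _)),
    add_pow_char_of_commute p (Commute.one_right _), one_pow]
  simp only [LinearMap.add_apply, Pi.add_apply, shA_pow, shB_pow, Module.End.one_apply]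

lemma tt_lucas (m r : ℕ) (hr : r < p) (j : ℤ) :
    tt (ZMod p) (p*m+r) (p*j) = tt (ZMod p) m j * tt (ZMod p) r 0 := by
  induction m generalizing j with
  | zero =>
    rw [tt_zero]
    split_ifs with h
    · simp [h]
    · simp only [mul_zero, zero_add, zero_mul]
      rcases lt_or_gt_of_ne h with h | h
      · exact tt_vanish' _ _ _ (by nlinarith)
      · exact tt_vanish _ _ _ (by nlinarith)
  | succ m ih =>
    rw [show p*(m+1)+r = p*m+r+p by ring, tt_frob, tt_succ,
      show (p:ℤ)*j - p = p*(j-1) by ring, show (p:ℤ)*j + p = p*(j+1) by ring, ih, ih, ih]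
    ring

lemma lucas (m r : ℕ) (hr : r < p) :
    tt (ZMod p) (p*m+r) 0 = tt (ZMod p) m 0 * tt (ZMod p) r 0 := by
  simpa using tt_lucas p m r hr 0

lemma eps (q : ℕ) (hq : p = q + 1) (h3 : p ≠ 3) :
    tt (ZMod p) q 0 = 1 ∨ tt (ZMod p) q 0 = -1 := by
  have hP := hp.out
  have key : ∀ k : ℤ, 0 < k → k < p →
      tt (ZMod p) q (k-1) + tt (ZMod p) q k + tt (ZMod p) q (k+1) = 0 := by
    intro k h1 h2
    have h := tt_frob p 0 k
    rw [zero_add] at h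
    simp only [tt_zero] at h
    rw [if_neg (by omega), if_neg (by omega), if_neg (by omega)] at h
    rw [← tt_succ, ← hq, h]; simp
  have per : ∀ k : ℤ, 0 ≤ k → k + 3 ≤ p → tt (ZMod p) q (k+3) = tt (ZMod p) q k := by
    intro k h1 h2
    have a := key (k+1) (by omega) (by omega)
    have b := key (k+1+1) (by omega) (by omega)
    ring_nf at a b ⊢
    linear_combination b - a
  have per' : ∀ i : ℕ, (3*i : ℤ) ≤ p → tt (ZMod p) q (3*i) = tt (ZMod p) q 0 := by
    intro i
    induction i with
    | zero => simp
    | succ i ih =>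
      intro h
      push_cast at h ⊢
      rw [mul_add, mul_one, per _ (by omega) (by omega), ih (by omega)]
  have top : tt (ZMod p) q q = 1 := tt_top _ q
  have hn3 : p % 3 ≠ 0 := by
    intro h
    have : 3 ∣ p := Nat.dvd_of_mod_eq_zero h
    exact h3 (((Nat.prime_dvd_prime_iff_eq Nat.prime_three hP).1 this).symm)
  have h2 := hP.two_le
  rcases (show p % 3 = 1 ∨ p % 3 = 2 by omega) with h | h
  · left
    rw [← per' (q/3) (by omega), ← top]; congr 1; omega
  · right
    have a := key q (by omega) (by omega)
    rw [top, tt_vanish _ q (q+1) (by omega)] at a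
    rw [← per' (q/3) (by omega)]
    have : (3 * ((q/3 : ℕ):ℤ)) = q - 1 := by omega
    rw [this]
    linear_combination a
end frob

section ana

noncomputable def FF (f : ℕ → ℝ) (N : ℕ) : ℝ := ∑ n ∈ Finset.range N, f n

lemma FF_block (f : ℕ → ℝ) (p M : ℕ) :
    FF f (p*M) = ∑ r ∈ Finset.range p, FF (fun m => f (p*m+r)) M := by
  induction M with
  | zero => simp [FF]
  | succ M ih =>
    rw [mul_add, mul_one, FF, Finset.sum_range_add, ← FF, ih, ← Finset.sum_add_distrib]
    refine Finset.sum_congr rfl fun r _ => ?_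
    rw [FF, FF, Finset.sum_range_succ]

lemma FF_near (f : ℕ → ℝ) (h0 : ∀ n, 0 ≤ f n) (h1 : ∀ n, f n ≤ 1) (M j : ℕ) :
    |FF f (M + j) - FF f M| ≤ j := by
  rw [FF, FF, Finset.sum_range_add, add_sub_cancel_left,
    abs_of_nonneg (Finset.sum_nonneg fun i _ => h0 _)]
  calc _ ≤ ∑ i ∈ Finset.range j, (1:ℝ) := Finset.sum_le_sum fun i _ => h1 _
    _ = j := by simp

lemma FF_red (f : ℕ → ℝ) (h0 : ∀ n, 0 ≤ f n) (h1 : ∀ n, f n ≤ 1) (p N : ℕ) (hp : 0 < p) (d : ℝ)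
    (hd : |d| ≤ 1) :
    |FF f N - d * N| ≤ 2 * p + |FF f (p*(N/p)) - d * (p * (N/p : ℕ))| := by
  have e : N = p*(N/p) + N % p := (Nat.div_add_mod N p).symm
  have hj : N % p < p := Nat.mod_lt _ hp
  generalize N / p = M at *
  generalize N % p = j at *
  subst e
  have a := FF_near f h0 h1 (p*M) j
  have hj' : (j:ℝ) ≤ p := by exact_mod_cast hj.le
  have hj0 : (0:ℝ) ≤ j := by positivity
  have b : |d * j| ≤ j := by
    rw [abs_mul, abs_of_nonneg hj0]; nlinarith
  have : FF f (p*M+j) - d * ((p*M+j : ℕ):ℝ) =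
    (FF f (p*M+j) - FF f (p*M)) + (FF f (p*M) - d * (p * (M:ℕ))) + (- (d * j)) := by
    push_cast; ring
  rw [this]
  refine (abs_add_three _ _ _).trans ?_
  rw [abs_neg]; linarith

lemma E_bound {ι : Type} (e : ι → ℕ → ℝ) (σ : ι → ι) (q : ℕ) (hq : 1 ≤ q) (d : ι → ℝ)
    (h0 : ∀ c n, 0 ≤ e c n) (h1 : ∀ c n, e c n ≤ 1) (hd : ∀ c, |d c| ≤ 1)
    (hr : ∀ c m r, r < q → e c ((q+1)*m+r) = e c r)
    (hs : ∀ c m, e c ((q+1)*m+q) = e (σ c) m)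
    (hrec : ∀ c, ((q:ℝ)+1) * d c = ∑ r ∈ Finset.range q, e c r + d (σ c)) (N : ℕ) :
    ∀ c, |FF (e c) N - d c * N| ≤ 2 * (q+1) * (1 + (Nat.log 2 N : ℝ)) := by
  induction N using Nat.strong_induction_on with
  | _ N ih =>
  intro c
  rcases Nat.eq_zero_or_pos N with rfl | hN
  · simp [FF]; positivity
  have a := FF_red (e c) (h0 c) (h1 c) (q+1) N (by omega) (d c) (hd c)
  set M := N/(q+1) with hM
  have hlt : M < N := Nat.div_lt_self hN (by omega)
  have b := ih M hlt (σ c)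
  have blk : FF (e c) ((q+1)*M) - d c * (((q+1:ℕ):ℝ) * M) = FF (e (σ c)) M - d (σ c) * M := by
    rw [FF_block, Finset.sum_range_succ]
    have : ∑ r ∈ Finset.range q, FF (fun m => e c ((q+1)*m+r)) M
        = (∑ r ∈ Finset.range q, e c r) * M := by
      rw [Finset.sum_mul]
      refine Finset.sum_congr rfl fun r hr' => ?_
      rw [FF, Finset.sum_congr rfl fun m _ => hr c m r (Finset.mem_range.1 hr')]
      simp [mul_comm]
    rw [this]
    simp only [hs]
    have := hrec c
    push_cast
    have e1 : FF (fun m => e (σ c) m) M = FF (e (σ c)) M := rfl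
    rw [e1]
    linear_combination (-(M:ℝ)) * this
  rw [blk] at a
  push_cast at a
  rcases Nat.eq_zero_or_pos M with h | h
  · rw [h] at a
    simp [FF] at a
    have : (0:ℝ) ≤ Nat.log 2 N := by positivity
    have hq0 : (0:ℝ) ≤ q := by positivity
    unfold FF
    nlinarith
  · have h2 : 2 * M ≤ N := by
      have : (q+1) * M ≤ N := Nat.mul_div_le N (q+1)
      nlinarith
    have hl : Nat.log 2 M + 1 ≤ Nat.log 2 N := by
      rw [← Nat.log_mul_base (by norm_num) (by omega)]
      exact Nat.log_mono_right (by omega)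
    have hl' : (Nat.log 2 M : ℝ) + 1 ≤ Nat.log 2 N := by exact_mod_cast hl
    have hq0 : (0:ℝ) ≤ q := by positivity
    nlinarith

lemma tend_of_bound (f : ℕ → ℝ) (D K : ℝ)
    (h : ∀ N, |FF f N - D * N| ≤ K * (1 + (Nat.log 2 N : ℝ))) :
    Tendsto (fun N : ℕ => FF f N / N) atTop (nhds D) := by
  have l1 : Tendsto (fun N : ℕ => Real.log N / N) atTop (nhds 0) :=
    (Real.isLittleO_log_id_atTop.tendsto_div_nhds_zero).comp tendsto_natCast_atTop_atTop
  have l2 : Tendsto (fun N : ℕ => 1 / (N:ℝ)) atTop (nhds 0) := tendsto_one_div_atTop_nhds_zero_nat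
  have l3 : Tendsto (fun N : ℕ => |K| * (1 / (N:ℝ) + (Real.log 2)⁻¹ * (Real.log N / N)))
      atTop (nhds 0) := by
    simpa using (l2.add (l1.const_mul (Real.log 2)⁻¹)).const_mul |K|
  rw [tendsto_iff_norm_sub_tendsto_zero]
  refine squeeze_zero' (Eventually.of_forall fun _ => norm_nonneg _) ?_ l3
  filter_upwards [eventually_gt_atTop 0] with N hN
  have hN' : (0:ℝ) < N := by exact_mod_cast hN
  have e : FF f N / N - D = (FF f N - D * N) / N := by field_simp
  rw [e, Real.norm_eq_abs, abs_div, abs_of_pos hN', div_le_iff₀ hN']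
  have g := Real.natLog_le_logb N 2
  rw [Real.logb] at g
  push_cast at g
  have e2 : |K| * (1 / (N:ℝ) + (Real.log 2)⁻¹ * (Real.log N / N)) * N
      = |K| * (1 + Real.log N / Real.log 2) := by field_simp
  rw [e2]
  have : (0:ℝ) ≤ Nat.log 2 N := by positivity
  calc _ ≤ _ := h N
    _ ≤ |K| * (1 + (Nat.log 2 N : ℝ)) := by gcongr; exact le_abs_self K
    _ ≤ _ := by gcongr
end ana

section fin

open scoped Classical in
noncomputable def ee {p : ℕ} (T : ℕ → ZMod p) (c : ZMod p) (m : ℕ) : ℝ :=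
  if T (m+1) = c * T m then 1 else 0

lemma ee_nonneg {p : ℕ} (T : ℕ → ZMod p) (c : ZMod p) (m : ℕ) : 0 ≤ ee T c m := by
  unfold ee; split_ifs <;> norm_num

lemma ee_le {p : ℕ} (T : ℕ → ZMod p) (c : ZMod p) (m : ℕ) : ee T c m ≤ 1 := by
  unfold ee; split_ifs <;> norm_num

lemma sum_ge {p : ℕ} (T : ℕ → ZMod p) (c : ZMod p) (q i : ℕ) (hi : i < q)
    (h : T (i+1) = c * T i) : 1 ≤ ∑ r ∈ Finset.range q, ee T c r := by
  have : ee T c i = 1 := if_pos h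
  rw [← this]
  exact Finset.single_le_sum (fun j _ => ee_nonneg T c j) (Finset.mem_range.2 hi)

open scoped Classical in
theorem core (s : ℕ) (hs : 2 ≤ s) [hp : Fact (s+3).Prime] (T : ℕ → ZMod (s+3))
    (luc : ∀ m r, r < s+3 → T ((s+3)*m+r) = T m * T r)
    (ne : ∀ r, r < s+3 → T r ≠ 0)
    (t0 : T 0 = 1) (t1 : T 1 = 1) (t2 : T 2 = 3)
    (ε : ZMod (s+3)) (he : ε = 1 ∨ ε = -1)
    (k2 : T (s+2) = ε) (k1 : T (s+2) = -3 * T (s+1)) (k0 : T (s+1) = - T s) :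
    ∃ D : ℝ, Tendsto (fun N : ℕ =>
      FF (fun n => if 3 * T n + 2 * T (n+1) - T (n+2) = 0 then (1:ℝ) else 0) N / N) atTop (nhds D) ∧
      2 / (((s+3:ℕ) : ℝ) * (((s+3:ℕ) : ℝ) - 1)) ≤ D := by
  have nz : ∀ m, T m ≠ 0 := by
    intro m
    induction m using Nat.strong_induction_on with
    | _ m ih =>
    by_cases h : m < s+3
    · exact ne m h
    · have e := Nat.div_add_mod m (s+3)
      rw [← e, luc _ _ (Nat.mod_lt _ (by omega))]
      exact mul_ne_zero (ih _ (Nat.div_lt_self (by omega) (by omega)))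
        (ne _ (Nat.mod_lt _ (by omega)))
  have hee : ε * ε = 1 := by rcases he with h | h <;> simp [h]
  have luc0 : ∀ m, T ((s+3)*m+(s+2)+1) = T (m+1) := by
    intro m
    have := luc (m+1) 0 (by omega)
    rw [t0, mul_one] at this
    rw [← this]; congr 1
  have luc1 : ∀ m, T ((s+3)*m+(s+2)+2) = T (m+1) := by
    intro m
    have := luc (m+1) 1 (by omega)
    rw [t1, mul_one] at this
    rw [← this]; congr 1
  set a : ZMod (s+3) → ℝ := fun c => ∑ r ∈ Finset.range (s+2), ee T c r with ha
  have a0 : ∀ c, 0 ≤ a c := fun c => Finset.sum_nonneg fun r _ => ee_nonneg T c r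
  have aU : ∀ c, a c ≤ s+2 := by
    intro c
    calc a c ≤ ∑ r ∈ Finset.range (s+2), (1:ℝ) := Finset.sum_le_sum fun r _ => ee_le T c r
      _ = s + 2 := by simp
  set P : ℝ := (s:ℝ) + 3 with hP
  have hs0 : (0:ℝ) ≤ s := by positivity
  have hPP : 0 < P^2 - 1 := by rw [hP]; nlinarith
  set d : ZMod (s+3) → ℝ := fun c => (P * a c + a (c*ε)) / (P^2-1) with hd
  have d0 : ∀ c, 0 ≤ d c := fun c => by
    have := a0 c; have := a0 (c*ε); simp only [hd]; positivity
  have dU : ∀ c, d c ≤ 1 := fun c => by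
    simp only [hd]
    rw [div_le_one hPP]
    have := aU c; have := aU (c*ε)
    have hP0 : 0 ≤ P := by positivity
    nlinarith
  have hE := E_bound (ee T) (fun c => c * ε) (s+2) (by omega) d (ee_nonneg T) (ee_le T)
    (fun c => by rw [abs_of_nonneg (d0 c)]; exact dU c)
    (by
      intro c m r hr
      unfold ee
      have l1 := luc m r (by omega)
      have l2 := luc m (r+1) (by omega)
      have : (T ((s+2+1)*m+r+1) = c * T ((s+2+1)*m+r)) ↔ (T (r+1) = c * T r) := by
        change (T ((s+3)*m+(r+1)) = c * T ((s+3)*m+r)) ↔ _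
        rw [l1, l2, mul_left_comm]
        exact mul_right_inj' (nz m)
      simp only [this])
    (by
      intro c m
      unfold ee
      have l1 := luc m (s+2) (by omega)
      have : (T ((s+2+1)*m+(s+2)+1) = c * T ((s+2+1)*m+(s+2))) ↔ (T (m+1) = c * ε * T m) := by
        change (T ((s+3)*m+(s+2)+1) = c * T ((s+3)*m+(s+2))) ↔ _
        rw [l1, luc0, k2, mul_comm (T m), mul_assoc]
      simp only [this])
    (by
      intro c
      change _ = a c + d (c * ε)
      simp only [hd]
      rw [mul_assoc c ε ε, hee, mul_one]
      push_cast
      have : (s:ℝ) + 2 + 1 = P := by rw [hP]; ring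
      rw [this]
      field_simp
      ring)
  set g : ℕ → ℝ := fun n => if 3 * T n + 2 * T (n+1) - T (n+2) = 0 then (1:ℝ) else 0 with hg
  have g0 : ∀ n, 0 ≤ g n := fun n => by simp only [hg]; split_ifs <;> norm_num
  have g1 : ∀ n, g n ≤ 1 := fun n => by simp only [hg]; split_ifs <;> norm_num
  have gr : ∀ m r, r < s+1 → g ((s+3)*m+r) = g r := by
    intro m r hr
    simp only [hg]
    have : (3 * T ((s+3)*m+r) + 2 * T ((s+3)*m+r+1) - T ((s+3)*m+r+2) = 0) ↔
        (3 * T r + 2 * T (r+1) - T (r+2) = 0) := by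
      rw [add_assoc _ r 1, add_assoc _ r 2, luc m r (by omega), luc m (r+1) (by omega),
        luc m (r+2) (by omega)]
      rw [show 3 * (T m * T r) + 2 * (T m * T (r+1)) - T m * T (r+2)
        = T m * (3 * T r + 2 * T (r+1) - T (r+2)) by ring, mul_eq_zero, or_iff_right (nz m)]
    simp only [this]
  have gr1 : ∀ m, g ((s+3)*m+(s+1)) = ee T ε m := by
    intro m
    simp only [hg, ee]
    have : (3 * T ((s+3)*m+(s+1)) + 2 * T ((s+3)*m+(s+1)+1) - T ((s+3)*m+(s+1)+2) = 0) ↔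
        (T (m+1) = ε * T m) := by
      have l := luc0 m
      have l2 := luc m (s+2) (by omega)
      have e1 : (s+3)*m+(s+1)+1 = (s+3)*m+(s+2) := by ring
      have e2 : (s+3)*m+(s+1)+2 = (s+3)*m+(s+2)+1 := by ring
      rw [e1, e2, l, l2, luc m (s+1) (by omega)]
      have : 3 * (T m * T (s+1)) + 2 * (T m * T (s+2)) - T (m+1) = ε * T m - T (m+1) := by
        rw [← k2]; linear_combination (T m) * k1
      rw [this, sub_eq_zero, eq_comm]
    simp only [this]
  have gr2 : ∀ m, g ((s+3)*m+(s+2)) = ee T (-3*ε) m := by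
    intro m
    simp only [hg, ee]
    have : (3 * T ((s+3)*m+(s+2)) + 2 * T ((s+3)*m+(s+2)+1) - T ((s+3)*m+(s+2)+2) = 0) ↔
        (T (m+1) = -3 * ε * T m) := by
      rw [luc0, luc1, luc m (s+2) (by omega), k2]
      constructor <;> intro h <;> linear_combination h
    simp only [this]
  set b : ℝ := ∑ r ∈ Finset.range (s+1), g r with hb
  have b0 : 0 ≤ b := Finset.sum_nonneg fun r _ => g0 r
  have bU : b ≤ s+1 := by
    calc b ≤ ∑ r ∈ Finset.range (s+1), (1:ℝ) := Finset.sum_le_sum fun r _ => g1 r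
      _ = s + 1 := by simp
  set D : ℝ := (b + d ε + d (-3*ε)) / P with hD
  have hP0 : 0 < P := by positivity
  have D0 : 0 ≤ D := by
    have := d0 ε; have := d0 (-3*ε); positivity
  have D1 : D ≤ 1 := by
    rw [hD, div_le_one hP0]
    linarith [dU ε, dU (-3*ε)]
  refine ⟨D, tend_of_bound g D (6 * P) ?_, ?_⟩
  · intro N
    have r1 := FF_red g g0 g1 (s+3) N (by omega) D (by rw [abs_of_nonneg D0]; exact D1)
    set M := N / (s+3) with hM
    have hMN : M ≤ N := Nat.div_le_self _ _
    have hl : (Nat.log 2 M : ℝ) ≤ Nat.log 2 N := by exact_mod_cast Nat.log_mono_right hMN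
    have blk : FF g ((s+3)*M) - D * (((s+3:ℕ):ℝ) * M)
        = (FF (ee T ε) M - d ε * M) + (FF (ee T (-3*ε)) M - d (-3*ε) * M) := by
      rw [FF_block, Finset.sum_range_succ, Finset.sum_range_succ]
      have : ∑ r ∈ Finset.range (s+1), FF (fun m => g ((s+3)*m+r)) M = b * M := by
        rw [hb, Finset.sum_mul]
        refine Finset.sum_congr rfl fun r hr' => ?_
        rw [FF, Finset.sum_congr rfl fun m _ => gr m r (Finset.mem_range.1 hr')]
        simp [mul_comm]
      rw [this]
      simp only [gr1, gr2]
      have hDP : D * P = b + d ε + d (-3*ε) := by rw [hD]; field_simp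
      push_cast
      have e1 : FF (fun m => ee T ε m) M = FF (ee T ε) M := rfl
      have e2 : FF (fun m => ee T (-3*ε) m) M = FF (ee T (-3*ε)) M := rfl
      rw [e1, e2]
      linear_combination (-(M:ℝ)) * hDP
    rw [blk] at r1
    have x1 := hE M ε
    have x2 := hE M (-3*ε)
    have x3 := abs_add_le (FF (ee T ε) M - d ε * M) (FF (ee T (-3*ε)) M - d (-3*ε) * M)
    push_cast at r1 x1 x2
    have : (s:ℝ) + 2 + 1 = P := by rw [hP]; ring
    rw [this] at x1 x2
    have lN : (0:ℝ) ≤ Nat.log 2 N := by positivity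
    have : P * (Nat.log 2 M : ℝ) ≤ P * Nat.log 2 N := by gcongr
    have : 0 ≤ P * (Nat.log 2 N : ℝ) := by positivity
    nlinarith
  · have A1 : 1 ≤ a 1 := sum_ge T 1 (s+2) 0 (by omega) (by rw [t0, zero_add, t1, one_mul])
    have A3 : 1 ≤ a 3 := sum_ge T 3 (s+2) 1 (by omega) (by rw [t1]; simpa using t2)
    have Am3 : 1 ≤ a (-3) := sum_ge T (-3) (s+2) (s+1) (by omega) k1
    have Am1 : 1 ≤ a (-1) := sum_ge T (-1) (s+2) s (by omega) (by rw [k0]; ring)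
    have dl : ∀ c, 1 ≤ a c → 1 ≤ a (c*ε) → 1 / (P - 1) ≤ d c := by
      intro c h h'
      simp only [hd]
      have : 0 < P - 1 := by rw [hP]; linarith
      rw [div_le_div_iff₀ this hPP]
      have h5 : P + 1 ≤ P * a c + a (c*ε) := by nlinarith
      have h6 := mul_le_mul_of_nonneg_right h5 this.le
      linarith
    have d1 : 1 / (P-1) ≤ d ε := by
      apply dl
      · rcases he with h | h <;> rw [h] <;> assumption
      · rw [hee]; exact A1
    have d3 : 1 / (P-1) ≤ d (-3*ε) := by
      apply dl
      · rcases he with h | h <;> rw [h]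
        · simpa using Am3
        · simpa using A3
      · rw [mul_assoc, hee, mul_one]; exact Am3
    have e : ((s+3:ℕ):ℝ) = P := by push_cast; rfl
    rw [e, hD, le_div_iff₀ hP0]
    have hP1 : P - 1 ≠ 0 := by rw [hP]; linarith
    have : 2 / (P * (P-1)) * P = 1/(P-1) + 1/(P-1) := by field_simp; ring
    rw [this]; linarith
end fin

open scoped Classical in
theorem stmt15 (p : ℕ) (hp : p.Prime) (hp2 : 2 < p)
    (hT : ∀ n < p, ¬ (p : ℤ) ∣ centralTrinomial n) :
    ∃ D : ℝ,
      Tendsto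
        (fun N : ℕ =>
          (((Finset.range N).filter (fun n => (p : ℤ) ∣ motzkin n)).card : ℝ) / N)
        atTop (nhds D) ∧
      2 / ((p : ℝ) * ((p : ℝ) - 1)) ≤ D := by
  have : Fact p.Prime := ⟨hp⟩
  have dv : ∀ z : ℤ, (p:ℤ) ∣ z ↔ ((z : ℤ) : ZMod p) = 0 :=
    fun z => (ZMod.intCast_zmod_eq_zero_iff_dvd z p).symm
  have v2 : ∀ R : Type, ∀ [CommRing R], tt R 2 0 = 3 := by
    intro R _
    simp [tt]; norm_num
  have h3 : p ≠ 3 := by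
    rintro rfl
    apply hT 2 (by norm_num)
    rw [central_eq, v2 ℤ]; norm_num
  have h4 : p ≠ 4 := by rintro rfl; norm_num at hp
  obtain ⟨s, rfl⟩ : ∃ s, p = s + 3 := ⟨p - 3, by omega⟩
  have hs : 2 ≤ s := by omega
  have c0 : ((s:ZMod (s+3)) + 3) = 0 := by
    have := ZMod.natCast_self (s+3)
    push_cast at this; exact this
  have small : ∀ k : ℕ, 0 < k → k < s + 3 → (k : ZMod (s+3)) ≠ 0 := by
    intro k h1 h2 h
    rw [ZMod.natCast_eq_zero_iff] at h
    exact absurd (Nat.le_of_dvd h1 h) (by omega)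
  have n2 : (2 : ZMod (s+3)) ≠ 0 := by exact_mod_cast small 2 (by omega) (by omega)
  have n3 : (3 : ZMod (s+3)) ≠ 0 := by exact_mod_cast small 3 (by omega) (by omega)
  have k1 : tt (ZMod (s+3)) (s+2) 0 = -3 * tt (ZMod (s+3)) (s+1) 0 := by
    have h := tt_rec (ZMod (s+3)) (s+1)
    have hF := c0
    push_cast at h
    rw [show s + 1 + 1 = s + 2 by ring] at h
    generalize tt (ZMod (s+3)) (s+1+2) 0 = w at h
    linear_combination h + (-w + 2 * tt (ZMod (s+3)) (s+2) 0 + 3 * tt (ZMod (s+3)) (s+1) 0) * hF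
  have k0 : tt (ZMod (s+3)) (s+1) 0 = - tt (ZMod (s+3)) s 0 := by
    have h := tt_rec (ZMod (s+3)) s
    have : (2 * 3 : ZMod (s+3)) * (tt (ZMod (s+3)) (s+1) 0 + tt (ZMod (s+3)) s 0) = 0 := by
      linear_combination h + k1 - (tt (ZMod (s+3)) (s+2) 0 - 2 * tt (ZMod (s+3)) (s+1) 0 - 3 * tt (ZMod (s+3)) s 0) * c0
    have := (mul_eq_zero.1 this).resolve_left (mul_ne_zero n2 n3)
    linear_combination this
  obtain ⟨D, hD, hD2⟩ := core s hs (fun n => tt (ZMod (s+3)) n 0) (fun m r hr => lucas (s+3) m r hr)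
    (fun r hr h => hT r hr (by rw [dv, central_eq, tt_cast]; exact h))
    (by simp [tt]) (by simp [tt]) (v2 _) _ (eps (s+3) (s+2) rfl h3) rfl k1 k0
  refine ⟨D, ?_, hD2⟩
  refine hD.congr fun N => ?_
  congr 1
  rw [FF, Finset.sum_boole]
  congr 2
  refine Finset.filter_congr fun n _ => ?_
  rw [dv, motzkin_eq]
  push_cast
  rw [tt_cast, tt_cast, ← tt_mot, mul_eq_zero, or_iff_right n2]
end

section
/- Define s_n to be the coefficient of X^{n−1} in the polynomial ((1 + X + X^2)^n : ℤ[X]) for n ≥ 1 and s_0 = 0 (this is sequence A005717, the constant term of (X^{-1} + 1 + X)^n · X), so that 2s_n = T_{n+1} − T_n for all n. Let p > 2 be a prime such that p does not divide the central trinomial coefficient T_n for any n < p. Then the natural density of {n ∈ ℕ : p ∣ s_n} exists and equals ( |{m < p−1 : T_m ≡ T_{p−1}·T_{m+1} (mod p)}| + p·|{m < p−1 : T_m ≡ T_{m+1} (mod p)}| ) / ((p−1)(p+1)); moreover this density is at least 1/(p−1). -/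
open Polynomial Filter

/-- Sequence A005717: the coefficient of X^(n-1) in (1+X+X^2)^n for n ≥ 1, and 0 for n = 0
(the constant term of (X⁻¹+1+X)^n · X). -/
noncomputable def A005717 (n : ℕ) : ℤ :=
  if n = 0 then 0 else ((1 + X + X ^ 2 : Polynomial ℤ) ^ n).coeff (n - 1)

open scoped Classical in
theorem cnt_block (q : ℕ) (A B : ℕ → Prop)
    (h1 : ∀ k, ∀ m < q, (A ((q+1)*k+m) ↔ A m)) (h2 : ∀ k, (A ((q+1)*k+q) ↔ B k)) (N : ℕ) :
    Nat.count A ((q+1)*N) = Nat.count A q * N + Nat.count B N := by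
  induction N with
  | zero => simp
  | succ k ih =>
    have e : Nat.count (fun i => A ((q+1)*k+i)) q = Nat.count A q := by
      rw [Nat.count_eq_card_filter_range, Nat.count_eq_card_filter_range]
      congr 1
      apply Finset.filter_congr
      intro m hm
      exact h1 k m (Finset.mem_range.1 hm)
    rw [show (q+1)*(k+1) = (q+1)*k + (q+1) by ring, Nat.count_add, ih, Nat.count_succ (n := q), e,
      Nat.count_succ (n := k)]
    simp only [h2]
    ring

open scoped Classical in
theorem cnt_err (q : ℕ) (A B : ℕ → Prop)
    (h1 : ∀ k, ∀ m < q, (A ((q+1)*k+m) ↔ A m)) (h2 : ∀ k, (A ((q+1)*k+q) ↔ B k))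
    (a b : ℝ) (hab : a * (q+1) = Nat.count A q + b) (N : ℕ) :
    |(Nat.count A N : ℝ) - a * N| ≤
      |(Nat.count B (N/(q+1)) : ℝ) - b * (N/(q+1) : ℕ)| + (1 + |a|) * (q+1) := by
  set k := N/(q+1) with hk
  set r := N % (q+1) with hr
  have hN : N = (q+1)*k + r := (Nat.div_add_mod N (q+1)).symm
  have hrl : r < q+1 := Nat.mod_lt _ (by omega)
  have hc : Nat.count A N = Nat.count A q * k + Nat.count B k
      + Nat.count (fun i => A ((q+1)*k+i)) r := by
    rw [hN, Nat.count_add, cnt_block q A B h1 h2]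
  have hc' : Nat.count (fun i => A ((q+1)*k+i)) r ≤ r := Nat.count_le _
  set c := Nat.count (fun i => A ((q+1)*k+i)) r
  have e : (Nat.count A N : ℝ) - a * N = ((Nat.count B k : ℝ) - b * k) + (c - a * r) := by
    rw [hc]
    have : (N : ℝ) = (q+1)*k + r := by exact_mod_cast hN
    rw [this]; push_cast
    linear_combination (-(k:ℝ)) * hab
  rw [e]
  refine (abs_add_le _ _).trans ?_
  gcongr
  have hr' : (r : ℝ) ≤ q + 1 := by exact_mod_cast hrl.le
  have hcr : (c : ℝ) ≤ q + 1 := by exact_mod_cast hc'.trans hrl.le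
  calc |(c:ℝ) - a * r| ≤ |(c:ℝ)| + |a * r| := abs_sub _ _
    _ = c + |a| * r := by rw [abs_mul, Nat.abs_cast, Nat.abs_cast]
    _ ≤ (q+1) + |a| * (q+1) := by gcongr
    _ = _ := by ring

theorem sqrt_bd (p : ℕ) (hp : 4 ≤ p) (f g : ℕ → ℝ) (C : ℝ) (hC : 0 ≤ C)
    (hf0 : f 0 ≤ 0) (hg0 : g 0 ≤ 0)
    (hf : ∀ N, f N ≤ g (N/p) + C) (hg : ∀ N, g N ≤ f (N/p) + C) (N : ℕ) :
    f N ≤ 2 * C * √N ∧ g N ≤ 2 * C * √N := by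
  induction N using Nat.strong_induction_on with
  | _ N ih =>
    rcases Nat.eq_zero_or_pos N with rfl | hN
    · simp [hf0, hg0]
    have hlt : N / p < N := Nat.div_lt_self hN (by omega)
    obtain ⟨i1, i2⟩ := ih _ hlt
    have hs : √((N/p : ℕ) : ℝ) ≤ √N / 2 := by
      rw [Real.sqrt_le_left (by positivity), div_pow, Real.sq_sqrt (by positivity)]
      have : N / p * 4 ≤ N := (Nat.mul_le_mul_left _ hp).trans (Nat.div_mul_le_self N p)
      have : ((N / p : ℕ) : ℝ) * 4 ≤ N := by exact_mod_cast this
      linarith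
    have h1 : (1:ℝ) ≤ √N := by
      rw [Real.one_le_sqrt]; exact_mod_cast hN
    have key : 2 * C * √((N/p : ℕ) : ℝ) + C ≤ 2 * C * √N := by nlinarith
    exact ⟨(hf N).trans (by linarith), (hg N).trans (by linarith)⟩

theorem tend_of_sqrt (f : ℕ → ℝ) (a C : ℝ) (h : ∀ N : ℕ, |f N - a * N| ≤ C * √N) :
    Tendsto (fun N : ℕ => f N / N) atTop (nhds a) := by
  rw [tendsto_iff_norm_sub_tendsto_zero]
  have l : Tendsto (fun N : ℕ => C / √(N:ℝ)) atTop (nhds 0) :=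
    Tendsto.div_atTop tendsto_const_nhds
      (Real.tendsto_sqrt_atTop.comp tendsto_natCast_atTop_atTop)
  refine squeeze_zero' (Eventually.of_forall fun _ => norm_nonneg _) ?_ l
  filter_upwards [eventually_gt_atTop 0] with N hN
  have hN' : (0:ℝ) < N := by exact_mod_cast hN
  have hs : (0:ℝ) < √N := Real.sqrt_pos.2 hN'
  rw [Real.norm_eq_abs, show f N / N - a = (f N - a * N) / N by field_simp, abs_div,
    abs_of_pos hN', div_le_div_iff₀ hN' hs]
  calc |f N - a * N| * √N ≤ C * √N * √N := by gcongr; exact h N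
    _ = C * N := by rw [mul_assoc, Real.mul_self_sqrt hN'.le]

open scoped Classical in
theorem density_main (q : ℕ) (hq : 3 ≤ q) (A B : ℕ → Prop)
    (h1 : ∀ k, ∀ m < q, (A ((q+1)*k+m) ↔ A m)) (h2 : ∀ k, (A ((q+1)*k+q) ↔ B k))
    (h3 : ∀ k, ∀ m < q, (B ((q+1)*k+m) ↔ B m)) (h4 : ∀ k, (B ((q+1)*k+q) ↔ A k)) :
    Tendsto (fun N : ℕ => (Nat.count A N : ℝ) / N) atTop
      (nhds (((Nat.count B q : ℝ) + (q+1) * Nat.count A q) / (q * (q+2)))) := by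
  set α : ℝ := ((Nat.count A q : ℕ) : ℝ) with hα
  set β : ℝ := ((Nat.count B q : ℕ) : ℝ) with hβ
  have hq0 : (0:ℝ) < q := by exact_mod_cast (by omega : 0 < q)
  set a : ℝ := (β + (q+1)*α)/(q*(q+2)) with ha
  set b : ℝ := (α + (q+1)*β)/(q*(q+2)) with hb
  have e1 : a * (q+1) = α + b := by rw [ha, hb]; field_simp; ring
  have e2 : b * (q+1) = β + a := by rw [ha, hb]; field_simp; ring
  set C : ℝ := (1 + |a|) * (q+1) + (1 + |b|) * (q+1) with hC
  have c1 : 0 ≤ (1 + |a|) * ((q:ℝ)+1) := by positivity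
  have c2 : 0 ≤ (1 + |b|) * ((q:ℝ)+1) := by positivity
  apply tend_of_sqrt _ _ (2*C)
  intro N
  refine (sqrt_bd (q+1) (by omega) (fun N => |(Nat.count A N : ℝ) - a * N|)
    (fun N => |(Nat.count B N : ℝ) - b * N|) C (by linarith) (by simp) (by simp) ?_ ?_ N).1
  · intro N
    have := cnt_err q A B h1 h2 a b e1 N
    linarith
  · intro N
    have := cnt_err q B A h3 h4 b a e2 N
    linarith

/-- trinomial base -/
noncomputable def QQ (R : Type) [CommRing R] : Polynomial R := 1 + X + X ^ 2

theorem coeff_QQ_mul (R : Type) [CommRing R] (P : Polynomial R) (j : ℕ) :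
    (QQ R * P).coeff (j+2) = P.coeff (j+2) + P.coeff (j+1) + P.coeff j := by
  rw [QQ, add_mul, add_mul, one_mul, coeff_add, coeff_add, coeff_X_mul (n := j+1),
    coeff_X_pow_mul (d := j)]

theorem rec_a (n : ℕ) (j : ℕ) :
    ((j:ℤ)+3) * (QQ ℤ ^ (n+1)).coeff (j+3) + (j+2) * (QQ ℤ ^ (n+1)).coeff (j+2) +
      (j+1) * (QQ ℤ ^ (n+1)).coeff (j+1) = (n+1) * ((QQ ℤ ^ (n+1)).coeff (j+2)
        + 2 * (QQ ℤ ^ (n+1)).coeff (j+1)) := by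
  have h : QQ ℤ * derivative (QQ ℤ ^ (n+1)) = C ((n:ℤ)+1) * ((1 + C 2 * X) * QQ ℤ ^ (n+1)) := by
    rw [derivative_pow]
    have : derivative (QQ ℤ) = 1 + C 2 * X := by simp [QQ]
    rw [this]
    simp
    ring
  have h' := congrArg (fun P => P.coeff (j+2)) h
  simp only [coeff_QQ_mul, coeff_derivative, coeff_C_mul, add_mul, one_mul, coeff_add, mul_assoc,
    coeff_X_mul (n := j+1)] at h'
  push_cast at h'
  linear_combination h'

theorem sym_a (n : ℕ) : (QQ ℤ ^ (n+2)).coeff (n+3) = (QQ ℤ ^ (n+2)).coeff (n+1) := by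
  have h := rec_a (n+1) n
  push_cast at h
  have h0 : ((n:ℤ)+3) ≠ 0 := by positivity
  apply mul_left_cancel₀ h0
  linear_combination h

theorem CT_eq (n : ℕ) : centralTrinomial n = (QQ ℤ ^ n).coeff n := rfl

theorem S_eq (n : ℕ) : A005717 (n+1) = (QQ ℤ ^ (n+1)).coeff n := by
  simp [A005717, QQ]

theorem T0 : centralTrinomial 0 = 1 := by simp [centralTrinomial]
theorem T1 : centralTrinomial 1 = 1 := by simp [centralTrinomial, coeff_X, coeff_one]
theorem S0 : A005717 0 = 0 := by simp [A005717]
theorem S1 : A005717 1 = 1 := by simp [A005717]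

theorem T_succ (n : ℕ) : centralTrinomial (n+1) = centralTrinomial n + 2 * A005717 n := by
  match n with
  | 0 => rw [T0, T1, S0]; norm_num
  | 1 =>
    rw [T1, S1, CT_eq, pow_succ', coeff_QQ_mul ℤ _ 0]
    simp [QQ, coeff_X, coeff_one]
  | n+2 =>
    rw [S_eq (n+1), CT_eq, pow_succ', coeff_QQ_mul ℤ _ (n+1), CT_eq, sym_a]
    ring

theorem S_succ (n : ℕ) : ((n:ℤ)+4) * A005717 (n+3) =
    (n+3) * (2 * centralTrinomial (n+2) + A005717 (n+2)) := by
  rw [S_eq (n+2), S_eq (n+1), CT_eq, pow_succ', coeff_QQ_mul ℤ _ n]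
  match n with
  | 0 =>
    have : QQ ℤ ^ (0+2) = 1 + C 2 * X + C 3 * X^2 + C 2 * X^3 + X^4 := by
      simp [QQ]; ring
    rw [this]
    simp [coeff_X, coeff_one, coeff_X_pow, -map_ofNat]
  | n+1 =>
    have h := rec_a (n+2) n
    push_cast at h ⊢
    linear_combination -h

section modp
variable (p : ℕ) [hpf : Fact p.Prime]

theorem cast_T (n : ℕ) : ((centralTrinomial n : ℤ) : ZMod p) = (QQ (ZMod p) ^ n).coeff n := by
  have : QQ (ZMod p) = (QQ ℤ).map (Int.castRingHom (ZMod p)) := by simp [QQ]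
  rw [CT_eq, this, ← Polynomial.map_pow, coeff_map]; simp

theorem QQ_deg (n : ℕ) : (QQ (ZMod p) ^ n).natDegree ≤ 2 * n := by
  have : (QQ (ZMod p)).natDegree ≤ 2 := by unfold QQ; compute_degree
  calc _ ≤ n * (QQ (ZMod p)).natDegree := natDegree_pow_le
    _ ≤ _ := by nlinarith

theorem QQ_frob (k : ℕ) : QQ (ZMod p) ^ (p * k) = expand (ZMod p) p (QQ (ZMod p) ^ k) := by
  rw [mul_comm, pow_mul, ZMod.expand_card]

theorem lucas_T (k m : ℕ) (hm : m < p) :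
    ((centralTrinomial (p*k+m) : ℤ) : ZMod p) = centralTrinomial k * centralTrinomial m := by
  have hp0 := hpf.out.pos
  rw [cast_T, cast_T, cast_T, pow_add, QQ_frob, coeff_mul, Finset.sum_eq_single (p*k, m)]
  · simp only
    rw [mul_comm p k, coeff_expand_mul hp0]
  · rintro ⟨a, b⟩ hab hne
    rw [Finset.HasAntidiagonal.mem_antidiagonal] at hab
    simp only at hab ⊢
    rw [coeff_expand hp0]
    split_ifs with hd
    · obtain ⟨i, rfl⟩ := hd
      rcases lt_trichotomy i k with h | h | h
      · have : p * (i+1) ≤ p * k := Nat.mul_le_mul_left _ h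
        have hz : (QQ (ZMod p) ^ m).coeff b = 0 := by
          apply coeff_eq_zero_of_natDegree_lt
          refine (QQ_deg p m).trans_lt ?_
          rw [mul_add] at this
          omega
        rw [hz, mul_zero]
      · subst h
        exact absurd (by simp; omega) hne
      · have : p * (k+1) ≤ p * i := Nat.mul_le_mul_left _ h
        rw [mul_add] at this
        omega
    · simp
  · intro h
    exact absurd (by simp) h

theorem T_pm1 (h2 : 2 < p) (h : ((centralTrinomial (p-1) : ℤ) : ZMod p) ≠ 0) :
    ((centralTrinomial (p-1) : ℤ) : ZMod p) ^ 2 = 1 := by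
  rw [cast_T] at *
  set P := QQ (ZMod p) ^ (p-1) with hP
  have hp0 := hpf.out.pos
  have hPQ : QQ (ZMod p) * P = expand (ZMod p) p (QQ (ZMod p)) := by
    rw [hP, ← pow_succ', show p - 1 + 1 = p * 1 by omega, QQ_frob, pow_one]
  have c0 : P.coeff 0 = 1 := by
    have := congrArg (fun P => P.coeff 0) hPQ
    simp only [mul_coeff_zero, coeff_expand hp0, dvd_zero, if_true, Nat.zero_div] at this
    simpa [QQ] using this
  have c1 : P.coeff 1 = -1 := by
    have := congrArg (fun P => P.coeff 1) hPQ
    have hnd : ¬ p ∣ 1 := by rw [Nat.dvd_one]; omega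
    simp only [coeff_expand hp0, if_neg hnd, QQ, add_mul, one_mul, coeff_add,
      coeff_X_mul (n := 0), c0, pow_two, mul_assoc] at this
    simp at this
    linear_combination this
  have cs : ∀ j, j + 2 < p → P.coeff (j+2) = - P.coeff (j+1) - P.coeff j := by
    intro j hj
    have := congrArg (fun P => P.coeff (j+2)) hPQ
    have hnd : ¬ p ∣ (j+2) := fun hd => by have := Nat.le_of_dvd (by omega) hd; omega
    simp only [coeff_expand hp0, if_neg hnd, coeff_QQ_mul] at this
    linear_combination this
  have key : ∀ j, j + 1 < p → (P.coeff j = 1 ∧ P.coeff (j+1) = -1) ∨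
      (P.coeff j = -1 ∧ P.coeff (j+1) = 0) ∨ (P.coeff j = 0 ∧ P.coeff (j+1) = 1) := by
    intro j
    induction j with
    | zero => intro _; left; exact ⟨c0, c1⟩
    | succ j ih =>
      intro hj
      rw [cs j hj]
      rcases ih (by omega) with ⟨x, y⟩ | ⟨x, y⟩ | ⟨x, y⟩ <;> simp [x, y]
  have := key (p-2) (by omega)
  rw [show p - 2 + 1 = p - 1 by omega] at this
  rcases this with ⟨_, y⟩ | ⟨_, y⟩ | ⟨_, y⟩ <;> simp_all

theorem T_pm3 (h5 : 5 ≤ p) :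
    ((centralTrinomial (p-3) : ℤ) : ZMod p) = - (centralTrinomial (p-2) : ℤ) := by
  obtain ⟨n, rfl⟩ : ∃ n, p = n + 5 := ⟨p - 5, by omega⟩
  simp only [show n + 5 - 3 = n + 2 by omega, show n + 5 - 2 = n + 3 by omega]
  have hc : ((n:ZMod (n+5))) = -5 := by
    have := ZMod.natCast_self (n+5)
    push_cast at this
    linear_combination this
  have hs := congrArg (Int.cast : ℤ → ZMod (n+5)) (S_succ n)
  have hs' := congrArg (Int.cast : ℤ → ZMod (n+5)) (S_succ (n+1))
  have ht := congrArg (Int.cast : ℤ → ZMod (n+5)) (T_succ (n+2))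
  rw [show n+1+3 = n+4 by ring, show n+1+2 = n+3 by ring] at hs'
  rw [show n+2+1 = n+3 by ring] at ht
  push_cast at hs hs' ht
  rw [hc] at hs hs'
  have h3 : (3 : ZMod (n+5)) ≠ 0 := by
    intro h
    have : ((3:ℕ) : ZMod (n+5)) = 0 := by exact_mod_cast h
    rw [ZMod.natCast_eq_zero_iff] at this
    have := Nat.le_of_dvd (by norm_num) this
    omega
  apply mul_left_cancel₀ h3
  linear_combination hs + hs' + ht

end modp

open scoped Classical in
theorem stmt16 (p : ℕ) (hp : p.Prime) (hp2 : 2 < p)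
    (hT : ∀ n < p, ¬ (p : ℤ) ∣ centralTrinomial n) :
    Tendsto
      (fun N : ℕ =>
        (((Finset.range N).filter (fun n => (p : ℤ) ∣ A005717 n)).card : ℝ) / N)
      atTop
      (nhds
        (((((Finset.range (p - 1)).filter
            (fun m => centralTrinomial m ≡
              centralTrinomial (p - 1) * centralTrinomial (m + 1) [ZMOD (p : ℤ)])).card : ℝ) +
          (p : ℝ) * (((Finset.range (p - 1)).filter
            (fun m => centralTrinomial m ≡ centralTrinomial (m + 1) [ZMOD (p : ℤ)])).card : ℝ)) /
          (((p : ℝ) - 1) * ((p : ℝ) + 1)))) ∧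
    1 / ((p : ℝ) - 1) ≤
      ((((Finset.range (p - 1)).filter
          (fun m => centralTrinomial m ≡
            centralTrinomial (p - 1) * centralTrinomial (m + 1) [ZMOD (p : ℤ)])).card : ℝ) +
        (p : ℝ) * (((Finset.range (p - 1)).filter
          (fun m => centralTrinomial m ≡ centralTrinomial (m + 1) [ZMOD (p : ℤ)])).card : ℝ)) /
        (((p : ℝ) - 1) * ((p : ℝ) + 1)) := by
  haveI : Fact p.Prime := ⟨hp⟩
  have hT2 : centralTrinomial 2 = 3 := by rw [T_succ 1, T1, S1]; norm_num
  have hp3 : p ≠ 3 := by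
    rintro rfl
    exact hT 2 (by norm_num) (by rw [hT2]; norm_num)
  have hp4 : p ≠ 4 := by rintro rfl; exact absurd hp (by norm_num)
  have h5 : 5 ≤ p := by omega
  set t : ℕ → ZMod p := fun n => ((centralTrinomial n : ℤ) : ZMod p) with ht
  have hne : ∀ n < p, t n ≠ 0 := fun n hn h =>
    hT n hn ((ZMod.intCast_zmod_eq_zero_iff_dvd _ _).1 h)
  have luc : ∀ k m, m < p → t (p*k+m) = t k * t m := fun k m hm => lucas_T p k m hm
  have hall : ∀ n, t n ≠ 0 := by
    intro n
    induction n using Nat.strong_induction_on with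
    | _ n ih =>
      by_cases hn : n < p
      · exact hne n hn
      · rw [← Nat.div_add_mod n p, luc _ _ (Nat.mod_lt _ hp.pos)]
        exact mul_ne_zero (ih _ (Nat.div_lt_self (by omega) (by omega)))
          (hne _ (Nat.mod_lt _ hp.pos))
  obtain ⟨q, rfl⟩ : ∃ q, p = q + 1 := ⟨p - 1, by omega⟩
  simp only [Nat.add_sub_cancel]
  have hu : t q ^ 2 = 1 := T_pm1 (q+1) hp2 (hne q (by omega))
  have t0 : t 0 = 1 := by simp [ht, T0]
  have t1 : t 1 = 1 := by simp [ht, T1]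
  have luc' : ∀ k, t ((q+1)*k+q+1) = t (k+1) := by
    intro k
    have := luc (k+1) 0 hp.pos
    rw [t0, mul_one] at this
    rw [← this]
    congr 1
  have h20 : (2 : ZMod (q+1)) ≠ 0 := by
    intro h
    have : ((2:ℕ) : ZMod (q+1)) = 0 := by exact_mod_cast h
    rw [ZMod.natCast_eq_zero_iff] at this
    have := Nat.le_of_dvd (by norm_num) this
    omega
  let A : ℕ → Prop := fun n => t n = t (n+1)
  let B : ℕ → Prop := fun n => t n = t q * t (n+1)
  have hA : ∀ n, (((q+1:ℕ):ℤ) ∣ A005717 n ↔ A n) := by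
    intro n
    rw [← ZMod.intCast_zmod_eq_zero_iff_dvd]
    have := congrArg (Int.cast : ℤ → ZMod (q+1)) (T_succ n)
    push_cast at this
    change t (n+1) = t n + _ at this
    constructor
    · intro h
      change t n = t (n+1)
      rw [this, h]; simp
    · intro h
      change t n = t (n+1) at h
      apply mul_left_cancel₀ h20
      linear_combination -this - h
  have hA' : ∀ m, (centralTrinomial m ≡ centralTrinomial (m + 1) [ZMOD ((q+1:ℕ) : ℤ)]) ↔ A m := by
    intro m
    rw [← ZMod.intCast_eq_intCast_iff]
  have hB' : ∀ m, (centralTrinomial m ≡ centralTrinomial q * centralTrinomial (m + 1)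
      [ZMOD ((q+1:ℕ) : ℤ)]) ↔ B m := by
    intro m
    rw [← ZMod.intCast_eq_intCast_iff]
    push_cast
    rfl
  have h1 : ∀ k, ∀ m < q, (A ((q+1)*k+m) ↔ A m) := by
    intro k m hm
    change t _ = t ((q+1)*k+(m+1)) ↔ t m = t (m+1)
    rw [luc _ _ (by omega), luc _ _ (by omega)]
    exact mul_right_inj' (hall k)
  have h3 : ∀ k, ∀ m < q, (B ((q+1)*k+m) ↔ B m) := by
    intro k m hm
    change t _ = t q * t ((q+1)*k+(m+1)) ↔ t m = t q * t (m+1)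
    rw [luc _ _ (by omega), luc _ _ (by omega), mul_left_comm]
    exact mul_right_inj' (hall k)
  have h2 : ∀ k, (A ((q+1)*k+q) ↔ B k) := by
    intro k
    change t _ = t ((q+1)*k+q+1) ↔ t k = t q * t (k+1)
    rw [luc _ _ (by omega), luc']
    constructor
    · intro h; linear_combination t q * h - t k * hu
    · intro h; linear_combination t q * h + t (k+1) * hu
  have h4 : ∀ k, (B ((q+1)*k+q) ↔ A k) := by
    intro k
    change t _ = t q * t ((q+1)*k+q+1) ↔ t k = t (k+1)
    rw [luc _ _ (by omega), luc', mul_comm]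
    exact mul_right_inj' (hall q)
  simp only [hA, hA', hB', ← Nat.count_eq_card_filter_range]
  have main := density_main q (by omega) A B h1 h2 h3 h4
  have ep : (((q+1:ℕ):ℝ) - 1) = q := by push_cast; ring
  have ep2 : (((q+1:ℕ):ℝ) + 1) = q + 2 := by push_cast; ring
  rw [ep, ep2]
  have hq0 : (0:ℝ) < q := by exact_mod_cast (by omega : 0 < q)
  refine ⟨by push_cast; convert main, ?_⟩
  have hα : 1 ≤ Nat.count A q := by
    rw [Nat.count_eq_card_filter_range, Nat.one_le_iff_ne_zero, Finset.card_ne_zero]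
    refine ⟨0, ?_⟩
    rw [Finset.mem_filter, Finset.mem_range]
    refine ⟨by omega, ?_⟩
    change t 0 = t 1
    rw [t0, t1]
  have hβ : 1 ≤ Nat.count B q := by
    rw [Nat.count_eq_card_filter_range, Nat.one_le_iff_ne_zero, Finset.card_ne_zero]
    rcases (sq_eq_one_iff).1 hu with h | h
    · refine ⟨0, ?_⟩
      rw [Finset.mem_filter, Finset.mem_range]
      refine ⟨by omega, ?_⟩
      change t 0 = t q * t 1
      rw [t0, t1, h, one_mul]
    · refine ⟨q - 2, ?_⟩
      rw [Finset.mem_filter, Finset.mem_range]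
      refine ⟨by omega, ?_⟩
      change t (q-2) = t q * t (q-2+1)
      have := T_pm3 (q+1) h5
      rw [show q + 1 - 3 = q - 2 by omega, show q + 1 - 2 = q - 2 + 1 by omega] at this
      rw [h, neg_one_mul]
      exact this
  have hα' : (1:ℝ) ≤ Nat.count A q := by exact_mod_cast hα
  have hβ' : (1:ℝ) ≤ Nat.count B q := by exact_mod_cast hβ
  rw [div_le_div_iff₀ hq0 (by positivity)]
  push_cast
  have : (q:ℝ) + 2 ≤ Nat.count B q + (q+1) * Nat.count A q := by nlinarith
  nlinarith
end

section
/- Define s_n as the coefficient of X^n in the polynomial ((1 + X + X^2)^n · (1 + X) : ℤ[X]) (sequence A005773, the constant term of (X^{-1} + 1 + X)^n (1 + X)), so that 2s_n = T_{n+1} + T_n for all n. Let p > 2 be a prime such that p does not divide the central trinomial coefficient T_n for any n < p. Then the natural density of {n ∈ ℕ : p ∣ s_n} exists and equals ( |{m < p−1 : T_m ≡ −T_{p−1}·T_{m+1} (mod p)}| + p·|{m < p−1 : T_m ≡ −T_{m+1} (mod p)}| ) / ((p−1)(p+1)); moreover this density is at least 1/(p−1). -/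
open Polynomial Filter

/-- Sequence A005773: the coefficient of X^n in (1+X+X^2)^n · (1+X)
(the constant term of (X⁻¹+1+X)^n (1+X)). -/
noncomputable def A005773 (n : ℕ) : ℤ :=
  (((1 + X + X ^ 2 : Polynomial ℤ) ^ n) * (1 + X)).coeff n

namespace Stmt18Aux

lemma two_mul_s (n : ℕ) : 2 * A005773 n = centralTrinomial (n + 1) + centralTrinomial n := by
  have h1 : ((n : ℤ) + 1) * centralTrinomial (n + 1)
      = ((n : ℤ) + 1) * ((1 + X + X ^ 2 : Polynomial ℤ) ^ n * (1 + 2 * X)).coeff n := by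
    have h := Polynomial.coeff_derivative ((1 + X + X ^ 2 : Polynomial ℤ) ^ (n + 1)) n
    have h2 : derivative ((1 + X + X ^ 2 : Polynomial ℤ) ^ (n + 1))
        = C ((n : ℤ) + 1) * ((1 + X + X ^ 2 : Polynomial ℤ) ^ n * (1 + 2 * X)) := by
      rw [Polynomial.derivative_pow_succ]
      simp
      ring
    rw [h2, coeff_C_mul] at h
    unfold centralTrinomial
    linarith
  have h3 := mul_left_cancel₀ (by positivity : ((n : ℤ) + 1) ≠ 0) h1
  rw [h3]
  unfold A005773 centralTrinomial
  rw [← Polynomial.coeff_add]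
  have : (2 : ℤ) * (((1 + X + X ^ 2 : Polynomial ℤ) ^ n) * (1 + X)).coeff n
      = (C 2 * (((1 + X + X ^ 2 : Polynomial ℤ) ^ n) * (1 + X))).coeff n := by
    rw [coeff_C_mul]
  rw [this]
  congr 1
  have : (C 2 : ℤ[X]) = 2 := rfl
  rw [this]
  ring

lemma cast_T (p n : ℕ) : ((centralTrinomial n : ℤ) : ZMod p)
    = ((1 + X + X ^ 2 : (ZMod p)[X]) ^ n).coeff n := by
  unfold centralTrinomial
  have := Polynomial.coeff_map (Int.castRingHom (ZMod p)) (p := (1 + X + X ^ 2 : ℤ[X]) ^ n) n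
  simp at this
  rw [this]

lemma cast_s (p n : ℕ) : ((A005773 n : ℤ) : ZMod p)
    = ((1 + X + X ^ 2 : (ZMod p)[X]) ^ n * (1 + X)).coeff n := by
  unfold A005773
  have := Polynomial.coeff_map (Int.castRingHom (ZMod p))
    (p := (1 + X + X ^ 2 : ℤ[X]) ^ n * (1 + X)) n
  simp only [Polynomial.map_mul, Polynomial.map_pow, Polynomial.map_add, Polynomial.map_one,
    Polynomial.map_X, eq_intCast] at this
  rw [this]

lemma lucas (p : ℕ) [Fact p.Prime] (a b : ℕ) (hb : b < p) :
    ((centralTrinomial (p * a + b) : ℤ) : ZMod p)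
      = (centralTrinomial a : ZMod p) * (centralTrinomial b : ZMod p) := by
  have hp : 0 < p := (Fact.out : p.Prime).pos
  rw [cast_T, cast_T, cast_T, pow_add, mul_comm p a, pow_mul, ← ZMod.expand_card,
    Polynomial.coeff_mul]
  rw [Finset.sum_eq_single (a * p, b)]
  · rw [Polynomial.coeff_expand_mul hp]
  · rintro ⟨i, j⟩ hij hne
    rw [Finset.HasAntidiagonal.mem_antidiagonal] at hij
    simp only at hij ⊢
    rw [Polynomial.coeff_expand hp]
    split_ifs with hd
    · have hj : ((1 + X + X ^ 2 : (ZMod p)[X]) ^ b).coeff j = 0 := by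
        apply Polynomial.coeff_eq_zero_of_natDegree_lt
        have h1 : ((1 + X + X ^ 2 : (ZMod p)[X]) ^ b).natDegree ≤ b * 2 := by
          apply Polynomial.natDegree_pow_le_of_le
          compute_degree
        refine lt_of_le_of_lt h1 ?_
        obtain ⟨k, rfl⟩ := hd
        rcases lt_trichotomy k a with h | h | h
        · obtain ⟨d, rfl⟩ := Nat.exists_eq_add_of_lt h
          have : j = p * d + p + b := by nlinarith
          have : 0 ≤ p * d := Nat.zero_le _
          omega
        · exfalso
          subst h
          apply hne
          rw [mul_comm p k] at hij
          ext
          · simp [mul_comm]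
          · simp; omega
        · exfalso
          obtain ⟨d, rfl⟩ := Nat.exists_eq_add_of_lt h
          nlinarith [Nat.zero_le (p * d)]
      rw [hj, mul_zero]
    · simp
  · intro h
    exact (h (by rw [Finset.HasAntidiagonal.mem_antidiagonal])).elim

lemma T_ne (p : ℕ) [Fact p.Prime]
    (hT : ∀ n < p, ((centralTrinomial n : ℤ) : ZMod p) ≠ 0) (n : ℕ) :
    ((centralTrinomial n : ℤ) : ZMod p) ≠ 0 := by
  induction n using Nat.strong_induction_on with
  | _ n ih =>
    by_cases h : n < p
    · exact hT n h
    · have hp : 1 < p := (Fact.out : p.Prime).one_lt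
      rw [← Nat.div_add_mod n p, lucas p _ _ (Nat.mod_lt _ (by omega))]
      exact mul_ne_zero (ih _ (Nat.div_lt_self (by omega) hp)) (hT _ (Nat.mod_lt _ (by omega)))

lemma eps_sq (p : ℕ) [Fact p.Prime] (hp2 : 2 < p)
    (h0 : ((centralTrinomial (p - 1) : ℤ) : ZMod p) ≠ 0) :
    ((centralTrinomial (p - 1) : ℤ) : ZMod p) = 1 ∨
    ((centralTrinomial (p - 1) : ℤ) : ZMod p) = -1 := by
  rw [cast_T] at *
  set Q : (ZMod p)[X] := (1 + X + X ^ 2) ^ (p - 1) with hQ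
  have hPQ : (1 + X + X ^ 2) * Q = 1 + X ^ p + X ^ (2 * p) := by
    rw [hQ, ← pow_succ', Nat.sub_add_cancel (by omega), ← ZMod.expand_card]
    simp
    ring
  have hrec : ∀ j, j + 2 < p → Q.coeff (j + 2) = - Q.coeff (j + 1) - Q.coeff j := by
    intro j hj
    have h := congrArg (fun f => Polynomial.coeff f (j + 2)) hPQ
    have e : (1 + X + X ^ 2) * Q = Q + X * Q + X * (X * Q) := by ring
    simp only [e, Polynomial.coeff_add, Polynomial.coeff_X_mul, Polynomial.coeff_X_pow,
      Polynomial.coeff_one] at h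
    rw [if_neg (by omega), if_neg (by omega), if_neg (by omega)] at h
    linear_combination h
  have hq0 : Q.coeff 0 = 1 := by
    simp [hQ, Polynomial.coeff_zero_eq_eval_zero]
  have hq1 : Q.coeff 1 = -1 := by
    have h := congrArg (fun f => Polynomial.coeff f 1) hPQ
    have e : (1 + X + X ^ 2) * Q = Q + X * Q + X * (X * Q) := by ring
    have e1 : (X * (X * Q)).coeff 1 = 0 := by
      rw [show 1 = 0 + 1 from rfl, Polynomial.coeff_X_mul]; simp
    have e2 : (X * Q).coeff 1 = Q.coeff 0 := by
      rw [show 1 = 0 + 1 from rfl, Polynomial.coeff_X_mul]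
    simp only [e, Polynomial.coeff_add, e1, e2, Polynomial.coeff_X_pow,
      Polynomial.coeff_one] at h
    rw [if_neg (by omega), if_neg (by omega), if_neg (by omega), hq0] at h
    linear_combination h
  have key : ∀ j, j + 1 < p → (Q.coeff j = 1 ∧ Q.coeff (j + 1) = -1) ∨
      (Q.coeff j = -1 ∧ Q.coeff (j + 1) = 0) ∨ (Q.coeff j = 0 ∧ Q.coeff (j + 1) = 1) := by
    intro j
    induction j with
    | zero => intro _; left; exact ⟨hq0, hq1⟩
    | succ j ih =>
      intro hj
      have hr := hrec j hj
      rw [show j + 1 + 1 = j + 2 from rfl, hr]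
      rcases ih (by omega) with ⟨a, b⟩ | ⟨a, b⟩ | ⟨a, b⟩ <;> rw [a, b] <;> simp
  have := key (p - 2) (by omega)
  rw [show p - 2 + 1 = p - 1 by omega] at this
  rcases this with ⟨_, b⟩ | ⟨_, b⟩ | ⟨_, b⟩
  · exact Or.inr b
  · exact absurd b h0
  · exact Or.inl b

lemma s_zero (p : ℕ) [Fact p.Prime] (hp3 : 3 < p) :
    ((A005773 (p - 3) : ℤ) : ZMod p) = 0 := by
  rw [cast_s]
  obtain ⟨k, rfl⟩ : ∃ k, p = k + 3 := ⟨p - 3, by omega⟩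
  rw [Nat.add_sub_cancel]
  have hk : ((k : ℕ) : ZMod (k + 3)) = -3 := by
    have h : ((k + 3 : ℕ) : ZMod (k + 3)) = 0 := ZMod.natCast_self _
    push_cast at h
    linear_combination h
  set P : (ZMod (k+3))[X] := 1 + X + X ^ 2 with hP
  have hid : X * derivative ((2 + X) * P ^ (k + 1)) + 3 * ((2 + X) * P ^ (k + 1))
      = 6 * (P ^ k * (1 + X)) := by
    rw [derivative_mul, Polynomial.derivative_pow_succ, hk]
    have e3 : (C 3 : (ZMod (k+3))[X]) = 3 := rfl
    simp [hP, e3]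
    ring
  have hc : (X * derivative ((2 + X) * P ^ (k + 1))
      + 3 * ((2 + X) * P ^ (k + 1))).coeff k = 0 := by
    have e3 : (3 : (ZMod (k+3))[X]) = C 3 := rfl
    rw [coeff_add, e3, coeff_C_mul]
    obtain ⟨l, rfl⟩ : ∃ l, k = l + 1 := ⟨k - 1, by omega⟩
    rw [coeff_X_mul, coeff_derivative]
    push_cast at hk
    rw [hk]
    ring
  have e6 : (6 : (ZMod (k+3))[X]) = C 6 := rfl
  rw [hid, e6, coeff_C_mul] at hc
  rcases mul_eq_zero.mp hc with h | h
  · exfalso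
    have h' : ((6 : ℕ) : ZMod (k + 3)) = 0 := by exact_mod_cast h
    rw [ZMod.natCast_eq_zero_iff] at h'
    have h2 : (k + 3) ∣ 2 * 3 := h'
    rcases (Nat.Prime.dvd_mul Fact.out).mp h2 with h | h <;>
      have := Nat.le_of_dvd (by norm_num) h <;> omega
  · exact h

section density
variable (p : ℕ) (Q R : ℕ → Prop) [DecidablePred Q] [DecidablePred R]

lemma count_step (hp : 0 < p) (h1 : ∀ a b, b < p - 1 → (Q (p * a + b) ↔ Q b))
    (h2 : ∀ a, Q (p * a + (p - 1)) ↔ R a) (M : ℕ) :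
    Nat.count Q (p * M) = M * Nat.count Q (p - 1) + Nat.count R M := by
  induction M with
  | zero => simp
  | succ M ih =>
    have e : p * (M + 1) = p * M + (p - 1) + 1 := by
      rw [mul_add]; omega
    rw [e, Nat.count_succ, Nat.count_add, ih, Nat.count_succ]
    have : Nat.count (fun k => Q (p * M + k)) (p - 1) = Nat.count Q (p - 1) := by
      simp only [Nat.count_eq_card_filter_range]
      congr 1
      apply Finset.filter_congr
      intro x hx
      exact h1 M x (Finset.mem_range.mp hx)
    rw [this]
    simp only [h2]
    ring

lemma err_step (hp : 2 < p) (h1 : ∀ a b, b < p - 1 → (Q (p * a + b) ↔ Q b))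
    (h2 : ∀ a, Q (p * a + (p - 1)) ↔ R a) (d1 d2 : ℝ) (hd1 : 0 ≤ d1)
    (hd : d1 * p = Nat.count Q (p - 1) + d2) (N : ℕ) :
    |(Nat.count Q N : ℝ) - d1 * N| ≤
      |(Nat.count R (N / p) : ℝ) - d2 * (N / p : ℕ)| + p * (1 + d1) := by
  set M := N / p with hM
  set c := N % p with hc
  have hN : N = p * M + c := (Nat.div_add_mod N p).symm
  have hcp : c < p := Nat.mod_lt _ (by omega)
  have hs := count_step p Q R (by omega) h1 h2 M
  have hq : Nat.count Q N = Nat.count Q (p * M) + Nat.count (fun k => Q (p * M + k)) c := by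
    rw [hN, Nat.count_add]
  have hle : Nat.count (fun k => Q (p * M + k)) c ≤ c := Nat.count_le _
  set δ := Nat.count (fun k => Q (p * M + k)) c
  have hNr : (N : ℝ) = p * M + c := by exact_mod_cast hN
  have e : (Nat.count Q N : ℝ) - d1 * N = (Nat.count R M - d2 * M) + (δ - d1 * c) := by
    rw [hq, hs, hNr]
    push_cast
    linear_combination (-(M : ℝ)) * hd
  rw [e]
  refine (abs_add_le _ _).trans ?_
  have h1 : (δ : ℝ) ≤ p := by exact_mod_cast (by omega : δ ≤ p)
  have h2 : (c : ℝ) ≤ p := by exact_mod_cast hcp.le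
  have h3 : d1 * c ≤ d1 * p := mul_le_mul_of_nonneg_left h2 hd1
  have h4 : 0 ≤ d1 * c := by positivity
  have h5 : (0 : ℝ) ≤ δ := by positivity
  have h6 : (0 : ℝ) ≤ d1 * p := by positivity
  have h7 : (0 : ℝ) ≤ p := by positivity
  gcongr
  rw [abs_le]
  constructor <;> nlinarith

end density

lemma sqrt_bound (p : ℕ) (hp : 4 ≤ p) (f g : ℕ → ℝ) (K : ℝ) (hK : 0 ≤ K)
    (hf0 : f 0 = 0) (hg0 : g 0 = 0)
    (hf : ∀ N, |f N| ≤ |g (N / p)| + K) (hg : ∀ N, |g N| ≤ |f (N / p)| + K) (N : ℕ) :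
    |f N| ≤ 2 * K * √N ∧ |g N| ≤ 2 * K * √N := by
  induction N using Nat.strong_induction_on with
  | _ N ih =>
    rcases Nat.eq_zero_or_pos N with rfl | hN
    · simp [hf0, hg0]
    · obtain ⟨i1, i2⟩ := ih (N / p) (Nat.div_lt_self hN (by omega))
      have h1 : (1 : ℝ) ≤ √N := by
        rw [Real.one_le_sqrt]; exact_mod_cast hN
      have h2 : √((N / p : ℕ) : ℝ) ≤ √N / 2 := by
        rw [Real.sqrt_le_left (by positivity), div_pow, Real.sq_sqrt (by positivity)]
        have : N / p * 4 ≤ N := (Nat.mul_le_mul_left _ hp).trans (Nat.div_mul_le_self N p)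
        have : ((N / p : ℕ) : ℝ) * 4 ≤ N := by exact_mod_cast this
        linarith
      have h3 : 2 * K * √((N / p : ℕ) : ℝ) ≤ 2 * K * (√N / 2) := by gcongr
      have h4 : K * 1 ≤ K * √N := by gcongr
      constructor
      · linarith [hf N]
      · linarith [hg N]

lemma tendsto_of_bound (u : ℕ → ℝ) (d K : ℝ) (h : ∀ N : ℕ, |u N - d * N| ≤ K * √N) :
    Tendsto (fun N : ℕ => u N / N) atTop (nhds d) := by
  have h0 : Tendsto (fun N : ℕ => K / √(N : ℝ)) atTop (nhds 0) := by
    apply Tendsto.const_div_atTop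
    exact Real.tendsto_sqrt_atTop.comp tendsto_natCast_atTop_atTop
  rw [tendsto_iff_dist_tendsto_zero]
  refine squeeze_zero' (Eventually.of_forall fun _ => dist_nonneg) ?_ h0
  filter_upwards [eventually_gt_atTop 0] with N hN
  have hN' : (0 : ℝ) < N := by exact_mod_cast hN
  have hs : 0 < √(N : ℝ) := Real.sqrt_pos.mpr hN'
  rw [Real.dist_eq, show u N / N - d = (u N - d * N) / N by field_simp, abs_div,
    abs_of_pos hN', div_le_div_iff₀ hN' hs]
  calc |u N - d * N| * √N ≤ K * √N * √N := by gcongr; exact h N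
    _ = K * N := by rw [mul_assoc, Real.mul_self_sqrt hN'.le]

end Stmt18Aux

open Stmt18Aux in
open scoped Classical in
theorem stmt18 (p : ℕ) (hp : p.Prime) (hp2 : 2 < p)
    (hT : ∀ n < p, ¬ (p : ℤ) ∣ centralTrinomial n) :
    Tendsto
      (fun N : ℕ =>
        (((Finset.range N).filter (fun n => (p : ℤ) ∣ A005773 n)).card : ℝ) / N)
      atTop
      (nhds
        (((((Finset.range (p - 1)).filter
            (fun m => centralTrinomial m ≡
              -(centralTrinomial (p - 1) * centralTrinomial (m + 1)) [ZMOD (p : ℤ)])).card : ℝ) +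
          (p : ℝ) * (((Finset.range (p - 1)).filter
            (fun m => centralTrinomial m ≡ -centralTrinomial (m + 1) [ZMOD (p : ℤ)])).card : ℝ)) /
          (((p : ℝ) - 1) * ((p : ℝ) + 1)))) ∧
    1 / ((p : ℝ) - 1) ≤
      ((((Finset.range (p - 1)).filter
          (fun m => centralTrinomial m ≡
            -(centralTrinomial (p - 1) * centralTrinomial (m + 1)) [ZMOD (p : ℤ)])).card : ℝ) +
        (p : ℝ) * (((Finset.range (p - 1)).filter
          (fun m => centralTrinomial m ≡ -centralTrinomial (m + 1) [ZMOD (p : ℤ)])).card : ℝ)) /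
        (((p : ℝ) - 1) * ((p : ℝ) + 1)) := by
  classical
  have : Fact p.Prime := ⟨hp⟩
  have hT' : ∀ n < p, ((centralTrinomial n : ℤ) : ZMod p) ≠ 0 := by
    intro n hn h
    exact hT n hn ((ZMod.intCast_zmod_eq_zero_iff_dvd _ _).mp h)
  have hT2 : centralTrinomial 2 = 3 := by
    unfold centralTrinomial
    have : ((1 + X + X ^ 2 : ℤ[X]) ^ 2)
      = 1 + C 2 * X + C 3 * X ^ 2 + C 2 * X ^ 3 + X ^ 4 := by
      simp only [map_ofNat]; ring
    rw [this]
    simp [coeff_X, coeff_one, coeff_X_pow]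
  have hp3 : 3 < p := by
    rcases Nat.lt_or_ge 3 p with h | h
    · exact h
    · exfalso
      have : p = 3 := by omega
      subst this
      exact hT 2 (by norm_num) (by rw [hT2]; norm_num)
  have hp4 : 4 ≤ p := hp3
  set t : ℕ → ZMod p := fun n => ((centralTrinomial n : ℤ) : ZMod p) with ht
  have tne : ∀ n, t n ≠ 0 := T_ne p hT'
  have luc : ∀ a b, b < p → t (p * a + b) = t a * t b := fun a b hb => lucas p a b hb
  set ε := t (p - 1) with hε
  have heps : ε = 1 ∨ ε = -1 := eps_sq p hp2 (tne _)
  have heps2 : ε * ε = 1 := by rcases heps with h | h <;> rw [h] <;> ring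
  have two_ne : (2 : ZMod p) ≠ 0 := by
    intro h
    have h' : ((2 : ℕ) : ZMod p) = 0 := by exact_mod_cast h
    rw [ZMod.natCast_eq_zero_iff] at h'
    have := Nat.le_of_dvd (by norm_num) h'
    omega
  have t0 : t 0 = 1 := by simp [ht, centralTrinomial]
  have t1 : t 1 = 1 := by simp [ht, centralTrinomial, coeff_X, coeff_one, coeff_X_pow]
  let Q : ℕ → Prop := fun n => t n + t (n + 1) = 0
  let R : ℕ → Prop := fun n => ε * t n + t (n + 1) = 0
  have hsQ : ∀ n, ((p : ℤ) ∣ A005773 n ↔ Q n) := by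
    intro n
    rw [← ZMod.intCast_zmod_eq_zero_iff_dvd]
    have h := congrArg (fun z : ℤ => (z : ZMod p)) (two_mul_s n)
    push_cast at h
    change _ ↔ t n + t (n + 1) = 0
    rw [add_comm, ← h, mul_eq_zero]
    simp [two_ne]
  have hBQ : ∀ m, (centralTrinomial m ≡ -centralTrinomial (m + 1) [ZMOD (p : ℤ)] ↔ Q m) := by
    intro m
    rw [← ZMod.intCast_eq_intCast_iff]
    push_cast
    exact eq_neg_iff_add_eq_zero
  have hAR : ∀ m, (centralTrinomial m ≡
      -(centralTrinomial (p - 1) * centralTrinomial (m + 1)) [ZMOD (p : ℤ)] ↔ R m) := by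
    intro m
    rw [← ZMod.intCast_eq_intCast_iff]
    push_cast
    change t m = -(ε * t (m + 1)) ↔ ε * t m + t (m + 1) = 0
    constructor
    · intro h
      rw [h]; linear_combination (-t (m + 1)) * heps2
    · intro h
      linear_combination ε * h - t m * heps2
  have hend : ∀ a, t (p * a + (p - 1) + 1) = t (a + 1) := by
    intro a
    have := luc (a + 1) 0 (by omega)
    rw [t0, mul_one] at this
    rw [← this]
    congr 1
    rw [mul_add]; omega
  have Q1 : ∀ a b, b < p - 1 → (Q (p * a + b) ↔ Q b) := by
    intro a b hb
    change t (p * a + b) + t (p * a + (b + 1)) = 0 ↔ t b + t (b + 1) = 0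
    rw [luc a b (by omega), luc a (b + 1) (by omega), ← mul_add, mul_eq_zero]
    simp [tne a]
  have R1 : ∀ a b, b < p - 1 → (R (p * a + b) ↔ R b) := by
    intro a b hb
    change ε * t (p * a + b) + t (p * a + (b + 1)) = 0 ↔ ε * t b + t (b + 1) = 0
    rw [luc a b (by omega), luc a (b + 1) (by omega),
      show ε * (t a * t b) + t a * t (b + 1) = t a * (ε * t b + t (b + 1)) by ring, mul_eq_zero]
    simp [tne a]
  have Q2 : ∀ a, Q (p * a + (p - 1)) ↔ R a := by
    intro a
    change t (p * a + (p - 1)) + t (p * a + (p - 1) + 1) = 0 ↔ ε * t a + t (a + 1) = 0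
    rw [luc a _ (by omega), hend, mul_comm (t a)]
  have R2 : ∀ a, R (p * a + (p - 1)) ↔ Q a := by
    intro a
    change ε * t (p * a + (p - 1)) + t (p * a + (p - 1) + 1) = 0 ↔ t a + t (a + 1) = 0
    rw [luc a _ (by omega), hend, ← hε,
      show ε * (t a * ε) = (ε * ε) * t a by ring, heps2, one_mul]
  simp only [hsQ, hBQ, hAR, ← Nat.count_eq_card_filter_range]
  set A := Nat.count R (p - 1) with hA
  set B := Nat.count Q (p - 1) with hB
  have hpr : (4 : ℝ) ≤ p := by exact_mod_cast hp4
  have hpos : (0 : ℝ) < ((p : ℝ) - 1) * ((p : ℝ) + 1) := by nlinarith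
  have hpos1 : (0 : ℝ) < (p : ℝ) - 1 := by linarith
  have hpos2 : (0 : ℝ) < (p : ℝ) + 1 := by linarith
  have hpn : (0 : ℝ) ≤ p := by linarith
  constructor
  · set d1 : ℝ := ((A : ℝ) + p * B) / (((p : ℝ) - 1) * ((p : ℝ) + 1)) with hd1
    set d2 : ℝ := ((B : ℝ) + p * A) / (((p : ℝ) - 1) * ((p : ℝ) + 1)) with hd2
    have d1n : 0 ≤ d1 := by positivity
    have d2n : 0 ≤ d2 := by positivity
    have e1 : d1 * p = B + d2 := by rw [hd1, hd2]; field_simp; ring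
    have e2 : d2 * p = A + d1 := by rw [hd1, hd2]; field_simp; ring
    have hb := sqrt_bound p hp4 (fun N => (Nat.count Q N : ℝ) - d1 * N)
      (fun N => (Nat.count R N : ℝ) - d2 * N) (p * (1 + d1 + d2)) (by positivity)
      (by simp) (by simp)
      (fun N => (err_step p Q R hp2 Q1 Q2 d1 d2 d1n e1 N).trans (by nlinarith [mul_nonneg hpn d1n, mul_nonneg hpn d2n]))
      (fun N => (err_step p R Q hp2 R1 R2 d2 d1 d2n e2 N).trans (by nlinarith [mul_nonneg hpn d1n, mul_nonneg hpn d2n]))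
    exact tendsto_of_bound _ _ _ (fun N => (hb N).1)
  · have hB1 : 1 ≤ B := by
      have hq : Q (p - 3) := (hsQ _).mp
        ((ZMod.intCast_zmod_eq_zero_iff_dvd _ _).mp (s_zero p hp3))
      have h1 := Nat.count_monotone Q (show p - 3 + 1 ≤ p - 1 by omega)
      rw [Nat.count_succ, if_pos hq] at h1
      omega
    have hA1 : 1 ≤ A := by
      rcases heps with h | h
      · have : A = B := by
          rw [hA, hB]
          congr 1
          funext n
          simp only [R, Q, h, one_mul]
        omega
      · have hr : R 0 := by
          change ε * t 0 + t 1 = 0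
          rw [h, t0, t1]; ring
        have h1 := Nat.count_monotone R (show 0 + 1 ≤ p - 1 by omega)
        rw [Nat.count_succ, if_pos hr] at h1
        omega
    have hA' : (1 : ℝ) ≤ A := by exact_mod_cast hA1
    have hB' : (1 : ℝ) ≤ B := by exact_mod_cast hB1
    rw [div_le_div_iff₀ hpos1 hpos]
    have : (p : ℝ) * 1 ≤ p * B := by gcongr
    have h5 : (p : ℝ) + 1 ≤ A + p * B := by linarith
    nlinarith
end
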